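/- arXiv:1005.1306 — 2 statements merged into one kernel-verified Lean document; each statement's English description precedes it below -/
import Mathlib

section
/- Let n and j be positive integers with 4j ≤ 2n + 1, let M be distributed according to the Haar probability measure on USp(2n,ℂ), and set W = Tr(M^j)/√j if j is odd and W = (Tr(M^j) + 1)/√j if j is even. Then the first four moments of W match those of a standard normal random variable: E[W] = 0, E[W²] = 1, E[W³] = 0, and E[W⁴] = 3. -/
open MeasureTheory ProbabilityTheory Matrix

/-- Matrices over a measurable space of entries carry the product σ-algebra
(the Borel σ-algebra, for matrices over `ℝ` or `ℂ`). -/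
instance matrixMeasurableSpace {m n α : Type*} [MeasurableSpace α] :
    MeasurableSpace (Matrix m n α) :=
  inferInstanceAs (MeasurableSpace (m → n → α))

/-- The compact symplectic group `USp(2n,ℂ)`: the `2n × 2n` complex unitary matrices `M`
with `M * J * Mᵀ = J`, where `J` is the `2n × 2n` block matrix `[[0, I], [−I, 0]]`
(equivalently, `Matrix.symplecticGroup`, whose defining matrix is `−J`; the two
conditions `M * J * Mᵀ = J` and `M * (−J) * Mᵀ = −J` are equivalent),
as a subgroup of the unitary group. -/
def USp (n : ℕ) : Subgroup (Matrix.unitaryGroup (Fin n ⊕ Fin n) ℂ) where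
  carrier :=
    {M | (M : Matrix (Fin n ⊕ Fin n) (Fin n ⊕ Fin n) ℂ) ∈ Matrix.symplecticGroup (Fin n) ℂ}
  mul_mem' := by
    intro a b ha hb
    simp only [Set.mem_setOf_eq, Matrix.UnitaryGroup.mul_val] at *
    exact mul_mem ha hb
  one_mem' := by
    simp only [Set.mem_setOf_eq, Matrix.UnitaryGroup.one_val]
    exact one_mem _
  inv_mem' := by
    intro M hM
    simp only [Set.mem_setOf_eq, Matrix.UnitaryGroup.inv_val] at *
    have h1 : (star (M : Matrix (Fin n ⊕ Fin n) (Fin n ⊕ Fin n) ℂ)) =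
        (M : Matrix (Fin n ⊕ Fin n) (Fin n ⊕ Fin n) ℂ)⁻¹ :=
      (Matrix.inv_eq_left_inv (Matrix.UnitaryGroup.star_mul_self M)).symm
    rw [h1, SymplecticGroup.inv_eq_symplectic_inv _ hM]
    exact mul_mem (mul_mem (SymplecticGroup.neg_mem (SymplecticGroup.J_mem _ _))
      (SymplecticGroup.transpose_mem hM)) (SymplecticGroup.J_mem _ _)

/-- The trace of the `k`-th power (`k : ℤ`, negative powers via the inverse) of an
element of `USp(2n,ℂ)`. -/
noncomputable def trUSp {n : ℕ} (M : USp n) (k : ℤ) : ℂ :=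
  Matrix.trace (((M ^ k : USp n) : Matrix.unitaryGroup (Fin n ⊕ Fin n) ℂ) :
    Matrix (Fin n ⊕ Fin n) (Fin n ⊕ Fin n) ℂ)

/-- The standard normal cumulative distribution function
`Φ(x₀) = (1/√(2π)) ∫_{-∞}^{x₀} e^{-x²/2} dx`. -/
noncomputable def Phi (x₀ : ℝ) : ℝ :=
  (Real.sqrt (2 * Real.pi))⁻¹ * ∫ x in Set.Iic x₀, Real.exp (-x ^ 2 / 2)

/-!
Left invariance of the Haar measure under one-parameter subgroups gives integration by parts on
`USp n`, and hence linear relations (loop equations) between the expectations of products of the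
traces `Tr (M ^ l)`. Independent normal variables with means `-1` (`l` even) or `0` (`l` odd) and
variances `l` satisfy the same relations, as Stein's identity shows. For products of weight
`∑ l = d ≤ 2n + 1` the relations are diagonally dominant: the loop equation bounds `2n + 1` times
the largest difference of the two solutions by `d - 1` times itself. So all moments of weight at
most `2n + 1` are Gaussian, in particular those of `Tr (M ^ j) ^ a` with `a * j ≤ 2n + 1`.
-/

open MvPolynomial

/-! ### Gaussian functionals -/

section GaussianFunctional

variable {R : Type*} [CommRing R]

/-- The `k`-th moment of a normal variable of mean `a` and variance `v`, defined by Stein's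
recursion so that it makes sense over every commutative ring. -/
def gaussianMoment (a v : R) : ℕ → R
  | 0 => 1
  | 1 => a
  | k + 2 => a * gaussianMoment a v (k + 1) + (k + 1) * v * gaussianMoment a v k

theorem gaussianMoment_succ (a v : R) (k : ℕ) :
    gaussianMoment a v (k + 1) = a * gaussianMoment a v k + k * v * gaussianMoment a v (k - 1) := by
  cases k <;> simp [gaussianMoment]

variable {ι : Type*}

/-- A linear functional satisfies the Stein identity with means `a` and variances `v` if it obeys
the Gaussian integration by parts formula for independent coordinates. -/
def SteinIdentity (a v : ι → R) (φ : MvPolynomial ι R →ₗ[R] R) : Prop :=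
  ∀ m f, φ (X m * f) = a m * φ f + v m * φ (pderiv m f)

/-- Expectation of polynomials in independent normal variables with means `a` and
variances `v`. -/
noncomputable def gaussianFunctional (a v : ι → R) : MvPolynomial ι R →ₗ[R] R :=
  (basisMonomials ι R).constr R fun s => s.prod fun l k => gaussianMoment (a l) (v l) k

theorem gaussianFunctional_monomial (a v : ι → R) (s : ι →₀ ℕ) (r : R) :
    gaussianFunctional a v (monomial s r) =
      r * s.prod fun l k => gaussianMoment (a l) (v l) k := by
  have h := (basisMonomials ι R).constr_basis R
    (fun s => s.prod fun l k => gaussianMoment (a l) (v l) k) s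
  rw [coe_basisMonomials] at h
  rw [← mul_one r, ← smul_eq_mul, ← smul_monomial, map_smul, gaussianFunctional, h, smul_eq_mul,
    smul_eq_mul, mul_one]

theorem gaussianFunctional_one (a v : ι → R) : gaussianFunctional a v 1 = 1 := by
  simpa using gaussianFunctional_monomial a v 0 1

theorem steinIdentity_gaussianFunctional (a v : ι → R) :
    SteinIdentity a v (gaussianFunctional a v) := by
  classical
  intro m f
  induction f using MvPolynomial.induction_on' with
  | add p q hp hq => simp only [mul_add, map_add, hp, hq]; ring
  | monomial s r =>
    have split (t : ι →₀ ℕ) : (t.prod fun l k => gaussianMoment (a l) (v l) k) =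
        gaussianMoment (a m) (v m) (t m) *
          (t.erase m).prod fun l k => gaussianMoment (a l) (v l) k :=
      (Finsupp.mul_prod_erase' t m _ fun _ => rfl).symm
    have erase_add : (Finsupp.single m 1 + s).erase m = s.erase m := by
      ext l; by_cases h : l = m <;> simp [h, Finsupp.erase_ne]
    have erase_sub : (s - Finsupp.single m 1).erase m = s.erase m := by
      ext l; by_cases h : l = m <;> simp [h, Finsupp.erase_ne]
    rw [X, monomial_mul, pderiv_monomial]
    simp only [gaussianFunctional_monomial]
    rw [split (_ + s), split s, split (s - _), erase_add, erase_sub]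
    simp only [Finsupp.add_apply, Finsupp.tsub_apply, Finsupp.single_eq_same, add_comm 1,
      gaussianMoment_succ]
    ring

theorem SteinIdentity.eq_zero {a v : ι → R} {φ : MvPolynomial ι R →ₗ[R] R}
    (h : SteinIdentity a v φ) (h1 : φ 1 = 0) : φ = 0 := by
  have monomial_eq_zero (s : ι →₀ ℕ) : ∀ r, φ (monomial s r) = 0 := by
    induction s using WellFoundedLT.induction with
    | ind s ih =>
    intro r
    obtain rfl | ⟨m, hm⟩ := s.support.eq_empty_or_nonempty.imp_left Finsupp.support_eq_empty.mp
    · rw [← mul_one r, ← smul_eq_mul, ← smul_monomial, map_smul]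
      exact (congrArg _ h1).trans (smul_zero r)
    · have hs : Finsupp.single m 1 + (s - Finsupp.single m 1) = s :=
        add_tsub_cancel_of_le (Finsupp.single_le_iff.mpr
          (Nat.one_le_iff_ne_zero.mpr (Finsupp.mem_support_iff.mp hm)))
      have hlt : s - Finsupp.single m 1 < s :=
        tsub_le_self.lt_of_ne fun e => by simp [e] at hs
      have hX : monomial s r = X m * monomial (s - Finsupp.single m 1) r := by
        rw [X, monomial_mul, hs, one_mul]
      rw [hX, h, pderiv_monomial, ih _ hlt, ih _ (tsub_le_self.trans_lt hlt)]
      simp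
  exact linearMap_ext fun s => LinearMap.ext fun r => monomial_eq_zero s r

theorem SteinIdentity.map_sub_C_pow_add_two {a v : ι → R} {φ : MvPolynomial ι R →ₗ[R] R}
    (h : SteinIdentity a v φ) (j : ι) (k : ℕ) :
    φ ((X j - C (a j)) ^ (k + 2)) = (k + 1) * v j * φ ((X j - C (a j)) ^ k) := by
  have hd : pderiv j ((X j - C (a j)) ^ (k + 1)) =
      C ((k : R) + 1) * (X j - C (a j)) ^ k := by
    simp [Derivation.leibniz_pow]
  have hC (r : R) (f : MvPolynomial ι R) : φ (C r * f) = r * φ f := by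
    rw [C_mul', map_smul, smul_eq_mul]
  rw [pow_succ' _ (k + 1), sub_mul, map_sub, h, hd, hC, hC]
  ring

theorem SteinIdentity.map_sub_C_pow {a v : ι → R} {φ : MvPolynomial ι R →ₗ[R] R}
    (h : SteinIdentity a v φ) (h1 : φ 1 = 1) (j : ι) (k : ℕ) :
    φ ((X j - C (a j)) ^ k) = if Even k then v j ^ (k / 2) * (k - 1).doubleFactorial else 0 := by
  induction k using Nat.twoStepInduction with
  | zero => simp [h1]
  | one =>
    have hX := h j 1
    simp_all [C_eq_smul_one]
  | more k ih _ =>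
    rw [h.map_sub_C_pow_add_two, ih]
    rcases k with _ | k
    · simp
    · by_cases hk : Even (k + 1) <;>
        simp [hk, Nat.even_add_one, pow_succ, Nat.doubleFactorial]
      ring

end GaussianFunctional

/-! ### The loop equations and their Gaussian solution -/

section LoopEquations

variable {R : Type*} [CommRing R]

variable (R) in
/-- The correction `η_l` to the trace of the `l`-th power: `1` for even `l`, `0` for odd `l`. -/
def evenIndicator (l : ℕ) : R := if Even l then 1 else 0

variable (R) in
/-- The derivation part of the `k`-th loop operator. The variable `X l` stands for `Tr (M ^ l)`,
whose derivatives along the symplectic directions that make up `M ^ k` add up to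
`l (Tr (M ^ (k + l)) - Tr (M ^ (k - l)))`. -/
noncomputable def loopDerivation (k : ℕ) : Derivation R (MvPolynomial ℕ R) (MvPolynomial ℕ R) :=
  mkDerivation R fun l => (l : R) • (X (k + l) - X (Nat.dist k l))

variable (R) in
/-- The divergence of `M ^ k` as a vector field, in terms of the variables `X l = Tr (M ^ l)`. -/
noncomputable def loopPotential (k : ℕ) : MvPolynomial ℕ R :=
  ∑ i ∈ Finset.range k, (X i * X (k - i) + X (Nat.dist k (2 * i)))

variable (R) in
/-- The first order differential operator whose image has expectation zero by the `k`-th loop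
equation. -/
noncomputable def loopOperator (k : ℕ) : MvPolynomial ℕ R →ₗ[R] MvPolynomial ℕ R :=
  LinearMap.mulLeft R (loopPotential R k) + (loopDerivation R k : _ →ₗ[R] _)

/-- The loop equations for a functional `φ` on polynomials in the traces of powers `X l` of a
matrix of size `c`. -/
structure SolvesLoopEquations (c : R) (φ : MvPolynomial ℕ R →ₗ[R] R) : Prop where
  map_X_zero_mul : ∀ f, φ (X 0 * f) = c * φ f
  map_loopOperator : ∀ k f, φ (loopOperator R k f) = 0

theorem loopOperator_apply (k : ℕ) (f : MvPolynomial ℕ R) :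
    loopOperator R k f = loopPotential R k * f + loopDerivation R k f := rfl

theorem loopDerivation_X (k l : ℕ) :
    loopDerivation R k (X l) = (l : R) • (X (k + l) - X (Nat.dist k l)) :=
  mkDerivation_X _ _ _

theorem loopOperator_X_mul (k m : ℕ) (f : MvPolynomial ℕ R) :
    loopOperator R k (X m * f) =
      X m * loopOperator R k f + (m : R) • ((X (k + m) - X (Nat.dist k m)) * f) := by
  simp only [loopOperator_apply, Derivation.leibniz, loopDerivation_X, smul_eq_mul,
    smul_eq_C_mul]
  ring

theorem SolvesLoopEquations.sub {c : R} {φ ψ : MvPolynomial ℕ R →ₗ[R] R}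
    (hφ : SolvesLoopEquations c φ) (hψ : SolvesLoopEquations c ψ) :
    SolvesLoopEquations c (φ - ψ) where
  map_X_zero_mul f := by
    simp only [LinearMap.sub_apply, hφ.map_X_zero_mul, hψ.map_X_zero_mul, mul_sub]
  map_loopOperator k f := by
    simp only [LinearMap.sub_apply, hφ.map_loopOperator, hψ.map_loopOperator, sub_zero]

theorem sum_range_ite_two_mul_eq {S : Type*} [NonAssocSemiring S] {k t : ℕ} (h : t < 2 * k) :
    (∑ i ∈ Finset.range k, if 2 * i = t then (1 : S) else 0) = if Even t then 1 else 0 := by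
  by_cases ht : Even t
  · obtain ⟨s, rfl⟩ := ht.two_dvd
    simp [show s < k by lia]
  · rw [if_neg ht]
    exact Finset.sum_eq_zero fun i _ => if_neg fun hi => ht <| by simp [← hi]

theorem pderiv_loopPotential (k m : ℕ) :
    pderiv m (loopPotential R k) = ∑ i ∈ Finset.range k,
      ((if i = m then X (k - i) else 0) + (if k - i = m then X i else 0) +
        if Nat.dist k (2 * i) = m then 1 else 0) := by
  simp only [loopPotential, map_sum, map_add, Derivation.leibniz, pderiv_X, Pi.single_apply,
    smul_eq_mul, mul_ite, mul_one, mul_zero]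
  exact Finset.sum_congr rfl fun i _ => by ring

theorem pderiv_loopPotential_of_lt {k m : ℕ} (hm : 0 < m) (hk : m < k) :
    pderiv m (loopPotential R k) = 2 * (X (k - m) + C (evenIndicator R (k - m))) := by
  have swap (i) (hi : i ∈ Finset.range k) : (if k - i = m then (X i : MvPolynomial ℕ R) else 0) =
      if i = k - m then X i else 0 := by
    rw [Finset.mem_range] at hi
    exact if_congr (by lia) rfl rfl
  have split (i) (_ : i ∈ Finset.range k) :
      (if Nat.dist k (2 * i) = m then (1 : MvPolynomial ℕ R) else 0) =
        (if 2 * i = k - m then 1 else 0) + if 2 * i = k + m then 1 else 0 := by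
    unfold Nat.dist
    split_ifs <;> first | lia | simp
  rw [pderiv_loopPotential, Finset.sum_add_distrib, Finset.sum_add_distrib,
    Finset.sum_congr rfl swap, Finset.sum_congr rfl split, Finset.sum_add_distrib,
    sum_range_ite_two_mul_eq (by lia), sum_range_ite_two_mul_eq (by lia)]
  simp only [Finset.sum_ite_eq', Finset.mem_range, hk, show k - m < k by lia, if_true,
    evenIndicator, Nat.even_sub hk.le, Nat.even_add]
  split_ifs <;> simp <;> ring

theorem pderiv_loopPotential_self {k : ℕ} (hk : 0 < k) :
    pderiv k (loopPotential R k) = X 0 + 1 := by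
  have single (i) (hi : i ∈ Finset.range k) :
      ((if i = k then X (k - i) else 0) + (if k - i = k then X i else 0) +
        if Nat.dist k (2 * i) = k then 1 else 0) =
      if i = 0 then (X 0 + 1 : MvPolynomial ℕ R) else 0 := by
    rw [Finset.mem_range] at hi
    unfold Nat.dist
    split_ifs <;> first | lia | simp_all
  rw [pderiv_loopPotential, Finset.sum_congr rfl single]
  simp [hk]

theorem pderiv_loopPotential_of_gt {k m : ℕ} (h : k < m) :
    pderiv m (loopPotential R k) = 0 := by
  rw [pderiv_loopPotential]
  refine Finset.sum_eq_zero fun i hi => ?_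
  rw [Finset.mem_range] at hi
  unfold Nat.dist
  split_ifs <;> first | lia | simp

theorem commutator_pderiv_loopDerivation {m : ℕ} (hm : 0 < m) (k : ℕ) :
    ⁅pderiv (R := R) m, loopDerivation R k⁆ =
      ((m : R) - k) • pderiv (Nat.dist k m) - ((m : R) + k) • pderiv (k + m) := by
  refine MvPolynomial.derivation_ext fun l => ?_
  have coeff : (l : ℤ) * ((if k + l = m then 1 else 0) - if Nat.dist k l = m then 1 else 0) =
      (m - k) * (if l = Nat.dist k m then 1 else 0) - (m + k) * if l = k + m then 1 else 0 := by
    unfold Nat.dist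
    split_ifs <;> simp <;> lia
  have h0 : (loopDerivation R k) (if l = m then 1 else 0) = 0 := by split_ifs <;> simp
  simp only [Derivation.commutator_apply, loopDerivation_X, Derivation.map_smul, map_sub, pderiv_X,
    Pi.single_apply, Derivation.sub_apply, Derivation.smul_apply, h0, sub_zero]
  simpa [smul_eq_C_mul] using congrArg (Int.cast : ℤ → MvPolynomial ℕ R) coeff

/-- The mean of the Gaussian variable matching `Tr (M ^ l)`; the trace of `M ^ 0 = 1`
is the constant `c`. -/
def loopMean (c : R) (l : ℕ) : R := if l = 0 then c else -evenIndicator R l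

theorem loopMean_zero (c : R) : loopMean c 0 = c := if_pos rfl

theorem loopMean_of_pos (c : R) {l : ℕ} (hl : 0 < l) : loopMean c l = -evenIndicator R l :=
  if_neg hl.ne'

theorem sum_evenIndicator_range (d : ℕ) :
    ∑ i ∈ Finset.range (2 * d), evenIndicator R i = d := by
  induction d with
  | zero => simp
  | succ d ih =>
    rw [Nat.mul_succ, Finset.sum_range_succ, Finset.sum_range_succ, ih]
    simp [evenIndicator]

theorem pderiv_loopOperator {m : ℕ} (hm : 0 < m) (k : ℕ) (f : MvPolynomial ℕ R) :
    pderiv m (loopOperator R k f) = loopOperator R k (pderiv m f) +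
      pderiv m (loopPotential R k) * f +
      (((m : R) - k) • pderiv (Nat.dist k m) f - ((m : R) + k) • pderiv (k + m) f) := by
  have h := congrArg (· f) (commutator_pderiv_loopDerivation (R := R) hm k)
  simp only [Derivation.commutator_apply, Derivation.sub_apply, Derivation.smul_apply] at h
  rw [← h]
  simp only [loopOperator_apply, map_add, Derivation.leibniz, smul_eq_mul]
  ring

section

variable {c : R} {φ : MvPolynomial ℕ R →ₗ[R] R}

theorem SteinIdentity.map_pderiv_loopOperator
    (h : SteinIdentity (loopMean c) Nat.cast φ) {m : ℕ} (hm : 0 < m) (k : ℕ)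
    (f : MvPolynomial ℕ R) :
    φ (pderiv m (loopOperator R k f)) =
      φ (loopOperator R k (pderiv m f)) - φ ((X (k + m) - X (Nat.dist k m)) * f) := by
  have hC (r : R) (g : MvPolynomial ℕ R) : φ (C r * g) = r * φ g := by
    rw [C_mul', map_smul, smul_eq_mul]
  have hsum := h (k + m) f
  have hdist := h (Nat.dist k m) f
  rw [loopMean_of_pos _ (by lia)] at hsum
  push_cast at hsum
  rw [pderiv_loopOperator hm]
  simp only [map_add, map_sub, map_smul, sub_mul, smul_eq_mul]
  obtain hmk | rfl | hkm := lt_trichotomy m k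
  · rw [Nat.dist_eq_sub_of_le_right hmk.le, loopMean_of_pos _ (by lia), Nat.cast_sub hmk.le]
      at hdist
    rw [Nat.dist_eq_sub_of_le_right hmk.le, pderiv_loopPotential_of_lt hm hmk, two_mul, add_mul,
      add_mul, map_add, map_add, hC]
    have hη : evenIndicator R (k + m) = evenIndicator R (k - m) := by
      simp only [evenIndicator, Nat.even_add, Nat.even_sub hmk.le]
    linear_combination hsum + hdist - φ f * hη
  · have hη : evenIndicator R (m + m) = 1 := if_pos ⟨m, rfl⟩
    rw [Nat.dist_self, loopMean_zero] at hdist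
    rw [Nat.dist_self, pderiv_loopPotential_self hm, add_mul, map_add, one_mul]
    linear_combination hsum - φ f * hη
  · rw [Nat.dist_eq_sub_of_le hkm.le, loopMean_of_pos _ (by lia), Nat.cast_sub hkm.le] at hdist
    rw [Nat.dist_eq_sub_of_le hkm.le, pderiv_loopPotential_of_gt hkm, zero_mul, map_zero]
    have hη : evenIndicator R (k + m) = evenIndicator R (m - k) := by
      simp only [evenIndicator, Nat.even_add, Nat.even_sub hkm.le, iff_comm]
    linear_combination hsum - hdist - φ f * hη

theorem SteinIdentity.comp_loopOperator (h : SteinIdentity (loopMean c) Nat.cast φ)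
    (k : ℕ) : SteinIdentity (loopMean c) Nat.cast (φ ∘ₗ loopOperator R k) := by
  intro m f
  simp only [LinearMap.comp_apply, loopOperator_X_mul, map_add, map_smul, h m, smul_eq_mul]
  obtain rfl | hm := m.eq_zero_or_pos
  · simp
  · rw [h.map_pderiv_loopOperator hm]
    ring

theorem loopMean_summand_of_even {d i : ℕ} (hi : i < 2 * d) (c : R) :
    loopMean c i * loopMean c (2 * d - i) + (if 2 * d - i = i then (i : R) else 0) +
        loopMean c (Nat.dist (2 * d) (2 * i)) =
      evenIndicator R i - 1 - (if i = 0 then c + 1 else 0) +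
        if i = d then (d + (c + 1) : R) else 0 := by
  have parity_sub : Even (2 * d - i) ↔ Even i := by simp [Nat.even_sub hi.le]
  have parity_dist : Even (Nat.dist (2 * d) (2 * i)) := by unfold Nat.dist; grind
  have self_sub_eq : 2 * d - i = i ↔ i = d := by lia
  have dist_eq_zero : Nat.dist (2 * d) (2 * i) = 0 ↔ i = d := by unfold Nat.dist; lia
  simp only [loopMean, evenIndicator, parity_sub, parity_dist, self_sub_eq, dist_eq_zero,
    show 2 * d - i ≠ 0 by lia, if_true, if_false]
  split_ifs <;> first | lia | simp_all <;> ring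

theorem loopMean_summand_of_odd {d i : ℕ} (hi : i < 2 * d + 1) (c : R) :
    loopMean c i * loopMean c (2 * d + 1 - i) + (if 2 * d + 1 - i = i then (i : R) else 0) +
        loopMean c (Nat.dist (2 * d + 1) (2 * i)) = 0 := by
  have parity_sub : Even (2 * d + 1 - i) ↔ ¬Even i := by
    simp [Nat.even_sub hi.le]
  have parity_dist : ¬Even (Nat.dist (2 * d + 1) (2 * i)) := by
    unfold Nat.dist; grind
  have dist_ne_zero : Nat.dist (2 * d + 1) (2 * i) ≠ 0 := by unfold Nat.dist; lia
  simp only [loopMean, evenIndicator, parity_sub, parity_dist, dist_ne_zero,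
    show 2 * d + 1 - i ≠ 0 by lia, show 2 * d + 1 - i ≠ i by lia, if_false]
  split_ifs <;> simp_all

theorem SteinIdentity.map_loopPotential (h : SteinIdentity (loopMean c) Nat.cast φ)
    (h1 : φ 1 = 1) (k : ℕ) : φ (loopPotential R k) = 0 := by
  have hX (l : ℕ) : φ (X l) = loopMean c l := by simpa [h1] using h l 1
  have hXX (i l : ℕ) :
      φ (X i * X l) = loopMean c i * loopMean c l + if l = i then (i : R) else 0 := by
    rw [h, hX, pderiv_X, Pi.single_apply]
    split_ifs <;> simp [h1]
  simp only [loopPotential, map_sum, map_add, hX, hXX]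
  obtain ⟨d, rfl | rfl⟩ := k.even_or_odd'
  · rw [Finset.sum_congr rfl fun i hi => loopMean_summand_of_even (Finset.mem_range.mp hi) c]
    obtain rfl | hd := d.eq_zero_or_pos
    · simp
    · simp [Finset.sum_add_distrib, Finset.sum_sub_distrib, sum_evenIndicator_range, hd]
      ring
  · exact Finset.sum_eq_zero fun i hi => loopMean_summand_of_odd (Finset.mem_range.mp hi) c

theorem SteinIdentity.solvesLoopEquations (h : SteinIdentity (loopMean c) Nat.cast φ)
    (h1 : φ 1 = 1) : SolvesLoopEquations c φ where
  map_X_zero_mul f := by simp [h 0 f, loopMean_zero]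
  map_loopOperator k f := by
    have h0 : (φ ∘ₗ loopOperator R k) 1 = 0 := by
      simp [loopOperator_apply, h.map_loopPotential h1]
    exact LinearMap.congr_fun ((h.comp_loopOperator k).eq_zero h0) f

end

end LoopEquations

/-! ### Uniqueness in low weight -/

section Uniqueness

/-- The product of the variables `X l` for `l ∈ S`, standing for a product of traces of powers; its
weight is `S.sum`. -/
noncomputable def powerMonomial (R : Type*) [CommSemiring R] (S : Multiset ℕ) : MvPolynomial ℕ R :=
  (S.map X).prod

theorem powerMonomial_zero (R : Type*) [CommSemiring R] : powerMonomial R 0 = 1 := by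
  simp [powerMonomial]

theorem powerMonomial_cons (R : Type*) [CommSemiring R] (l : ℕ) (S : Multiset ℕ) :
    powerMonomial R (l ::ₘ S) = X l * powerMonomial R S := by
  simp [powerMonomial]

theorem powerMonomial_add (R : Type*) [CommSemiring R] (S T : Multiset ℕ) :
    powerMonomial R (S + T) = powerMonomial R S * powerMonomial R T := by
  simp [powerMonomial]

variable {𝕜 : Type*} [NormedField 𝕜] {c : 𝕜} {φ : MvPolynomial ℕ 𝕜 →ₗ[𝕜] 𝕜} {d : ℕ} {m : ℝ}

theorem norm_map_mul_loopDerivation_powerMonomial_le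
    (lower : ∀ T : Multiset ℕ, T.sum < d → φ (powerMonomial 𝕜 T) = 0)
    (bound : ∀ T : Multiset ℕ, T.sum = d → 0 ∉ T → ‖φ (powerMonomial 𝕜 T)‖ ≤ m)
    {k : ℕ} (hk : 0 < k) (S : Multiset ℕ) (hS : 0 ∉ S) :
    ∀ U : Multiset ℕ, 0 ∉ U → k + S.sum + U.sum = d →
      ‖φ (powerMonomial 𝕜 U * loopDerivation 𝕜 k (powerMonomial 𝕜 S))‖ ≤ S.sum * m := by
  induction S using Multiset.induction_on with
  | empty => simp [powerMonomial_zero]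
  | cons l S ih =>
    intro U hU hd
    obtain ⟨hl, hS⟩ : 0 ≠ l ∧ 0 ∉ S := by simpa using hS
    rw [Multiset.sum_cons] at hd
    have rest := ih hS (l ::ₘ U) (by simp [hl, hU]) (by simp; lia)
    have top := bound ((k + l) ::ₘ (U + S)) (by simp; lia) (by simp [hU, hS]; lia)
    have low := lower (Nat.dist k l ::ₘ (U + S)) (by simp [Nat.dist]; lia)
    have expand : φ (powerMonomial 𝕜 U * loopDerivation 𝕜 k (powerMonomial 𝕜 (l ::ₘ S))) =
        φ (powerMonomial 𝕜 (l ::ₘ U) * loopDerivation 𝕜 k (powerMonomial 𝕜 S)) +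
          l * (φ (powerMonomial 𝕜 ((k + l) ::ₘ (U + S))) -
            φ (powerMonomial 𝕜 (Nat.dist k l ::ₘ (U + S)))) := by
      simp only [powerMonomial_cons, powerMonomial_add, Derivation.leibniz, loopDerivation_X,
        ← map_sub, ← smul_eq_mul (l : 𝕜), ← map_smul, ← map_add]
      congr 1
      simp only [smul_eq_C_mul, smul_eq_mul]
      ring
    rw [expand, low, sub_zero, Multiset.sum_cons, Nat.cast_add, add_mul, add_comm]
    refine (norm_add_le _ _).trans (add_le_add ?_ rest)
    rw [norm_mul]
    exact mul_le_mul ((Nat.norm_cast_le l).trans_eq (by simp)) top (norm_nonneg _) l.cast_nonneg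

theorem SolvesLoopEquations.norm_mul_map_powerMonomial_cons_le (h : SolvesLoopEquations c φ)
    (lower : ∀ T : Multiset ℕ, T.sum < d → φ (powerMonomial 𝕜 T) = 0)
    (bound : ∀ T : Multiset ℕ, T.sum = d → 0 ∉ T → ‖φ (powerMonomial 𝕜 T)‖ ≤ m)
    {k : ℕ} {S : Multiset ℕ} (hkS : 0 ∉ k ::ₘ S) (hd : (k ::ₘ S).sum = d) :
    ‖c + 1‖ * ‖φ (powerMonomial 𝕜 (k ::ₘ S))‖ ≤ ((d : ℝ) - 1) * m := by
  obtain ⟨hk, hS⟩ : 0 ≠ k ∧ 0 ∉ S := by simpa using hkS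
  obtain ⟨k, rfl⟩ := Nat.exists_eq_succ_of_ne_zero hk.symm
  rw [Multiset.sum_cons] at hd
  have derivation_le := norm_map_mul_loopDerivation_powerMonomial_le lower bound
    k.succ_pos S hS 0 (by simp) (by simpa using hd)
  have interior_le (i) (hi : i ∈ Finset.range k) :
      ‖φ (X (i + 1) * X (k + 1 - (i + 1)) * powerMonomial 𝕜 S) +
        φ (X (Nat.dist (k + 1) (2 * (i + 1))) * powerMonomial 𝕜 S)‖ ≤ m := by
    rw [Finset.mem_range] at hi
    have top := bound ((i + 1) ::ₘ (k + 1 - (i + 1)) ::ₘ S) (by simp; lia)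
      (by simp [hS]; lia)
    have low := lower (Nat.dist (k + 1) (2 * (i + 1)) ::ₘ S) (by simp [Nat.dist]; lia)
    rw [powerMonomial_cons] at low
    rw [powerMonomial_cons, powerMonomial_cons, ← mul_assoc] at top
    rwa [low, add_zero]
  have loop := h.map_loopOperator (k + 1) (powerMonomial 𝕜 S)
  simp only [loopOperator_apply, loopPotential, Finset.sum_range_succ', Finset.sum_mul, add_mul,
    map_add, map_sum] at loop
  rw [mul_assoc (X 0), h.map_X_zero_mul] at loop
  simp only [Nat.sub_zero, mul_zero, Nat.dist_zero_right] at loop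
  rw [powerMonomial_zero, one_mul] at derivation_le
  have isolate : (c + 1) * φ (powerMonomial 𝕜 ((k + 1) ::ₘ S)) =
      -(∑ i ∈ Finset.range k, (φ (X (i + 1) * X (k + 1 - (i + 1)) * powerMonomial 𝕜 S) +
        φ (X (Nat.dist (k + 1) (2 * (i + 1))) * powerMonomial 𝕜 S)) +
        φ (loopDerivation 𝕜 (k + 1) (powerMonomial 𝕜 S))) := by
    rw [powerMonomial_cons]
    linear_combination loop
  have hd' : (d : ℝ) - 1 = k + S.sum := by
    rw [← hd]; push_cast; ring
  rw [← norm_mul, isolate, norm_neg, hd', add_mul]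
  refine (norm_add_le _ _).trans (add_le_add ?_ derivation_le)
  exact (norm_sum_le_of_le _ interior_le).trans_eq (by simp)

theorem SolvesLoopEquations.map_powerMonomial_eq_zero_of_zero_notMem
    (h : SolvesLoopEquations c φ)
    (lower : ∀ T : Multiset ℕ, T.sum < d → φ (powerMonomial 𝕜 T) = 0)
    (hd : 0 < d) (hdc : (d : ℝ) < ‖c + 1‖ + 1) {S : Multiset ℕ} (hS : S.sum = d) (h0 : 0 ∉ S) :
    φ (powerMonomial 𝕜 S) = 0 := by
  obtain ⟨p, hp⟩ := Finite.exists_max fun p : d.Partition => ‖φ (powerMonomial 𝕜 p.parts)‖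
  have bound (T : Multiset ℕ) (hT : T.sum = d) (hT0 : 0 ∉ T) :
      ‖φ (powerMonomial 𝕜 T)‖ ≤ ‖φ (powerMonomial 𝕜 p.parts)‖ :=
    hp ⟨T, fun hi => Nat.pos_of_ne_zero fun e => hT0 (e ▸ hi), hT⟩
  obtain ⟨k, hk⟩ := Multiset.exists_mem_of_ne_zero (s := p.parts) fun e => by
    simpa [e, hd.ne] using p.parts_sum
  obtain ⟨T, hT⟩ := Multiset.exists_cons_of_mem hk
  have key := h.norm_mul_map_powerMonomial_cons_le lower bound (k := k) (S := T)
    (hT ▸ fun hi => (p.parts_pos hi).ne rfl) (hT ▸ p.parts_sum)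
  rw [← hT] at key
  have max_eq_zero : ‖φ (powerMonomial 𝕜 p.parts)‖ = 0 := by
    nlinarith [norm_nonneg (φ (powerMonomial 𝕜 p.parts))]
  exact norm_le_zero_iff.mp ((bound S hS h0).trans_eq max_eq_zero)

theorem SolvesLoopEquations.map_powerMonomial_eq_zero (h : SolvesLoopEquations c φ)
    (h1 : φ 1 = 0) (S : Multiset ℕ) (hS : (S.sum : ℝ) < ‖c + 1‖ + 1) :
    φ (powerMonomial 𝕜 S) = 0 := by
  induction hd : S.sum using Nat.strong_induction_on generalizing S with
  | h d ih =>
  have lower (T : Multiset ℕ) (hT : T.sum < d) : φ (powerMonomial 𝕜 T) = 0 :=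
    ih _ hT T ((Nat.cast_lt.mpr (hd ▸ hT)).trans hS) rfl
  induction S using Multiset.strongInductionOn with
  | ih S ihS =>
  by_cases h0 : 0 ∈ S
  · obtain ⟨T, rfl⟩ := Multiset.exists_cons_of_mem h0
    rw [Multiset.sum_cons, zero_add] at hS hd
    rw [powerMonomial_cons, h.map_X_zero_mul, ihS T (Multiset.lt_cons_self T 0) hS hd, mul_zero]
  · obtain rfl | hd0 := d.eq_zero_or_pos
    · have hS0 : S = 0 := Multiset.eq_zero_of_forall_notMem fun l hl =>
        h0 (Multiset.sum_eq_zero_iff.mp hd l hl ▸ hl)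
      rwa [hS0, powerMonomial_zero]
    · exact h.map_powerMonomial_eq_zero_of_zero_notMem lower hd0 (hd ▸ hS) hd h0

end Uniqueness

/-! ### The symplectic Lie algebra -/

section SymplecticLieAlgebra

open LieAlgebra.Symplectic

variable {l R : Type*} [DecidableEq l] [Fintype l]

theorem mem_sp_iff [CommRing R] {Z : Matrix (l ⊕ l) (l ⊕ l) R} :
    Z ∈ sp l R ↔ Zᵀ * J l R = J l R * -Z :=
  mem_skewAdjointMatricesSubmodule _ _

/-- Twice the projection of matrices onto the symplectic Lie algebra along the `J`-self-adjoint
matrices; the factor `2` is kept to avoid a division. -/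
def spPart [CommRing R] : Matrix (l ⊕ l) (l ⊕ l) R →ₗ[R] Matrix (l ⊕ l) (l ⊕ l) R :=
  LinearMap.id + LinearMap.mulRight R (J l R) ∘ₗ LinearMap.mulLeft R (J l R) ∘ₗ
    (transposeLinearEquiv (l ⊕ l) (l ⊕ l) R R).toLinearMap

theorem spPart_apply [CommRing R] (B : Matrix (l ⊕ l) (l ⊕ l) R) :
    spPart B = B + J l R * Bᵀ * J l R := rfl

theorem spPart_mem_sp [CommRing R] (B : Matrix (l ⊕ l) (l ⊕ l) R) : spPart B ∈ sp l R := by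
  have hJ (A : Matrix (l ⊕ l) (l ⊕ l) R) : J l R * (J l R * A) = -A := by
    rw [← Matrix.mul_assoc, J_squared, neg_one_mul]
  simp only [spPart_apply, mem_sp_iff, transpose_add, transpose_mul, transpose_transpose,
    J_transpose, Matrix.add_mul, Matrix.mul_add, Matrix.mul_neg, Matrix.neg_mul, Matrix.mul_assoc,
    J_squared, hJ, neg_add, neg_neg, mul_one]
  abel

theorem sum_apply_smul_spPart_single [CommRing R] (B : Matrix (l ⊕ l) (l ⊕ l) R) :
    ∑ b, ∑ a, B b a • spPart (single b a (1 : R)) = spPart B := by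
  conv_rhs => rw [matrix_eq_sum_single B]
  simp only [map_sum, ← map_smul, smul_single, smul_eq_mul, mul_one]

theorem sum_mul_spPart_single_mul_apply [CommRing R] (P Q : Matrix (l ⊕ l) (l ⊕ l) R) :
    ∑ b : l ⊕ l, ∑ a : l ⊕ l, (P * spPart (single b a (1 : R)) * Q) b a =
      trace P * trace Q - trace (P * (J l R * Qᵀ * J l R)) := by
  have single_apply (A B : Matrix (l ⊕ l) (l ⊕ l) R) (c d b a) :
      (A * single c d (1 : R) * B) b a = A b c * B d a := by
    simp [Matrix.mul_apply, single, ite_and]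
  have split (b a : l ⊕ l) : (P * spPart (single b a (1 : R)) * Q) b a =
      P b b * Q a a + (P * J l R) b a * (J l R * Q) b a := by
    rw [spPart_apply, transpose_single, Matrix.mul_add, Matrix.add_mul, Matrix.add_apply,
      single_apply, ← single_apply (P * J l R)]
    simp only [Matrix.mul_assoc]
  have trace_eq : trace (P * (J l R * Qᵀ * J l R)) =
      -∑ b, ∑ a, (P * J l R) b a * (J l R * Q) b a := by
    rw [← neg_neg (_ * J l R), ← Matrix.mul_neg _ (J l R), ← J_transpose, Matrix.mul_assoc,
      ← transpose_mul, Matrix.mul_neg, trace_neg, ← Matrix.mul_assoc]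
    rfl
  rw [trace_eq, sub_neg_eq_add]
  simp only [split, Finset.sum_add_distrib, trace, diag, Finset.sum_mul_sum]

theorem conjTranspose_mem_sp [CommRing R] [StarRing R] {Z : Matrix (l ⊕ l) (l ⊕ l) R}
    (hZ : Z ∈ sp l R) : Zᴴ ∈ sp l R := by
  have conjTranspose_J : (J l R)ᴴ = -J l R := by
    simp [J, fromBlocks_conjTranspose, fromBlocks_neg]
  have h : J l R * Zᴴᵀ = -(Zᴴ * J l R) := by
    have := congrArg conjTranspose (mem_sp_iff.mp hZ)
    simp only [conjTranspose_mul, conjTranspose_neg, conjTranspose_J, Matrix.neg_mul,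
      Matrix.mul_neg, neg_neg] at this
    rw [← this, neg_neg]
    rfl
  rw [mem_sp_iff]
  calc Zᴴᵀ * J l R = -(J l R * (J l R * Zᴴᵀ) * J l R) := by
        rw [← Matrix.mul_assoc, J_squared, neg_one_mul, Matrix.neg_mul, neg_neg]
    _ = J l R * Zᴴ * (J l R * J l R) := by
        rw [h, Matrix.mul_neg, Matrix.neg_mul, neg_neg]
        simp only [Matrix.mul_assoc]
    _ = J l R * -Zᴴ := by
        rw [J_squared, Matrix.mul_neg, Matrix.mul_one, Matrix.mul_neg]

theorem exp_mem_symplecticGroup {𝕂 : Type*} [RCLike 𝕂] {Z : Matrix (l ⊕ l) (l ⊕ l) 𝕂}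
    (hZ : Z ∈ sp l 𝕂) : NormedSpace.exp Z ∈ symplecticGroup l 𝕂 := by
  have hJ : IsUnit (J l 𝕂) := (Matrix.isUnit_iff_isUnit_det _).mpr (isUnit_det_J _ _)
  have hZt : Zᵀ = J l 𝕂 * -Z * (J l 𝕂)⁻¹ := by
    rw [← mem_sp_iff.mp hZ, mul_nonsing_inv_cancel_right _ _ (isUnit_det_J _ _)]
  have hexp : NormedSpace.exp (-Z) * NormedSpace.exp Z = 1 := by
    rw [← Matrix.exp_add_of_commute _ _ (Commute.refl Z).neg_left, neg_add_cancel,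
      NormedSpace.exp_zero]
  rw [SymplecticGroup.mem_iff', ← Matrix.exp_transpose, hZt, Matrix.exp_conj _ _ hJ,
    nonsing_inv_mul_cancel_right _ _ (isUnit_det_J _ _), Matrix.mul_assoc, hexp, Matrix.mul_one]

end SymplecticLieAlgebra

/-! ### The group `USp n` -/

instance (ι : Type*) [Fintype ι] [DecidableEq ι] : CompactSpace (Matrix.unitaryGroup ι ℂ) := by
  have entries_compact : IsCompact (Set.univ.pi fun _ : ι =>
      Set.univ.pi fun _ : ι => Metric.closedBall (0 : ℂ) 1) :=
    isCompact_univ_pi fun _ => isCompact_univ_pi fun _ => isCompact_closedBall _ _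
  refine isCompact_iff_compactSpace.mp (IsCompact.of_isClosed_subset (X := Matrix ι ι ℂ)
    entries_compact isClosed_unitary fun A hA i _ j _ => ?_)
  exact mem_closedBall_zero_iff.mpr (entry_norm_bound_of_unitary hA i j)

namespace USp

variable {n : ℕ}

/-- The inclusion of the compact symplectic group in the monoid of matrices. -/
def toMatrix : USp n →* Matrix (Fin n ⊕ Fin n) (Fin n ⊕ Fin n) ℂ :=
  (Matrix.unitaryGroup (Fin n ⊕ Fin n) ℂ).subtype.comp (USp n).subtype

theorem continuous_toMatrix : Continuous (toMatrix (n := n)) :=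
  continuous_subtype_val.comp continuous_subtype_val

theorem toMatrix_mem_symplecticGroup (M : USp n) :
    toMatrix M ∈ Matrix.symplecticGroup (Fin n) ℂ :=
  M.2

instance : CompactSpace (USp n) := by
  have hclosed : IsClosed (USp n : Set (Matrix.unitaryGroup (Fin n ⊕ Fin n) ℂ)) := by
    have : (USp n : Set (Matrix.unitaryGroup (Fin n ⊕ Fin n) ℂ)) =
        {A : Matrix.unitaryGroup (Fin n ⊕ Fin n) ℂ |
          (A : Matrix (Fin n ⊕ Fin n) (Fin n ⊕ Fin n) ℂ) * J (Fin n) ℂ *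
            (A : Matrix (Fin n ⊕ Fin n) (Fin n ⊕ Fin n) ℂ)ᵀ = J (Fin n) ℂ} :=
      Set.ext fun _ => SymplecticGroup.mem_iff
    rw [this]
    exact isClosed_eq (by fun_prop) continuous_const
  exact isCompact_iff_compactSpace.mp hclosed.isCompact

instance : BorelSpace (USp n) :=
  have : BorelSpace (Matrix (Fin n ⊕ Fin n) (Fin n ⊕ Fin n) ℂ) :=
    inferInstanceAs (BorelSpace (Fin n ⊕ Fin n → Fin n ⊕ Fin n → ℂ))
  have : BorelSpace (Matrix.unitaryGroup (Fin n ⊕ Fin n) ℂ) := Subtype.borelSpace _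
  Subtype.borelSpace _

theorem J_mul_transpose_toMatrix_mul_J (M : USp n) :
    J (Fin n) ℂ * (toMatrix M)ᵀ * J (Fin n) ℂ = -toMatrix M⁻¹ := by
  have h : toMatrix M⁻¹ = (toMatrix M)⁻¹ :=
    (Matrix.inv_eq_right_inv (by rw [← map_mul, mul_inv_cancel, map_one])).symm
  rw [h, SymplecticGroup.inv_eq_symplectic_inv _ (toMatrix_mem_symplecticGroup M), Matrix.neg_mul,
    Matrix.neg_mul, neg_neg]

theorem trace_toMatrix_inv (M : USp n) : trace (toMatrix M⁻¹) = trace (toMatrix M) := by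
  rw [← neg_neg (toMatrix M⁻¹), ← J_mul_transpose_toMatrix_mul_J, trace_neg, trace_mul_cycle,
    J_squared, neg_one_mul, trace_neg, neg_neg, trace_transpose]

theorem star_trace_toMatrix (M : USp n) : star (trace (toMatrix M)) = trace (toMatrix M) := by
  rw [← trace_conjTranspose, ← trace_toMatrix_inv]
  rfl

theorem trace_toMatrix_zpow (M : USp n) (k : ℤ) :
    trace (toMatrix (M ^ k)) = trace (toMatrix M ^ k.natAbs) := by
  obtain ⟨d, rfl | rfl⟩ := k.eq_nat_or_neg
  · simp
  · simp [trace_toMatrix_inv, ← map_pow]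

theorem trace_toMatrix_pow_mul_inv (M : USp n) (i k : ℕ) :
    trace (toMatrix M ^ i * toMatrix (M ^ k)⁻¹) = trace (toMatrix M ^ Nat.dist i k) := by
  have h : toMatrix M ^ i * toMatrix (M ^ k)⁻¹ = toMatrix (M ^ ((i : ℤ) - k)) := by
    rw [_root_.zpow_sub, zpow_natCast, zpow_natCast, map_mul, map_pow]
  have hdist : ((i : ℤ) - k).natAbs = Nat.dist i k := by unfold Nat.dist; lia
  rw [h, trace_toMatrix_zpow, hdist]

end USp

/-! ### Integration by parts on `USp n` -/

theorem exp_mem_unitaryGroup {ι 𝕂 : Type*} [Fintype ι] [DecidableEq ι] [RCLike 𝕂]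
    {A : Matrix ι ι 𝕂} (hA : A ∈ skewAdjoint (Matrix ι ι 𝕂)) :
    NormedSpace.exp A ∈ Matrix.unitaryGroup ι 𝕂 := by
  have hstar : Aᴴ = -A := skewAdjoint.mem_iff.mp hA
  rw [mem_unitaryGroup_iff', star_eq_conjTranspose, ← Matrix.exp_conjTranspose, hstar,
    ← Matrix.exp_add_of_commute _ _ (Commute.refl A).neg_left, neg_add_cancel,
    NormedSpace.exp_zero]

namespace USp

open LieAlgebra.Symplectic
open scoped Matrix.Norms.Operator ComplexStarModule

variable {n : ℕ} (μ : Measure (USp n)) [IsFiniteMeasure μ]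

theorem integrable_of_continuous {E : Type*} [NormedAddCommGroup E] {f : USp n → E}
    (hf : Continuous f) : Integrable f μ :=
  hf.integrable_of_hasCompactSupport (HasCompactSupport.of_compactSpace f)

variable {f : Matrix (Fin n ⊕ Fin n) (Fin n ⊕ Fin n) ℂ → ℂ}
  {Z : Matrix (Fin n ⊕ Fin n) (Fin n ⊕ Fin n) ℂ}

theorem continuous_fderiv_comp_toMatrix (hf : ContDiff ℂ 1 f)
    (Z : Matrix (Fin n ⊕ Fin n) (Fin n ⊕ Fin n) ℂ) :
    Continuous fun M : USp n => fderiv ℂ f (toMatrix M) (Z * toMatrix M) :=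
  ((hf.continuous_fderiv one_ne_zero).comp continuous_toMatrix).clm_apply
    (continuous_const.mul continuous_toMatrix)

variable [μ.IsMulLeftInvariant]

theorem integral_fderiv_mul_toMatrix_of_mem_skewAdjoint (hf : ContDiff ℂ 1 f)
    (hZ : Z ∈ sp (Fin n) ℂ) (hskew : Z ∈ skewAdjoint (Matrix (Fin n ⊕ Fin n) (Fin n ⊕ Fin n) ℂ)) :
    ∫ M, fderiv ℂ f (toMatrix M) (Z * toMatrix M) ∂μ = 0 := by
  let γ (t : ℝ) : USp n :=
    ⟨⟨NormedSpace.exp (t • Z), exp_mem_unitaryGroup (skewAdjoint.smul_mem t hskew)⟩,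
      exp_mem_symplecticGroup (Submodule.smul_mem _ (t : ℂ) hZ)⟩
  have deriv_curve (M : USp n) (t : ℝ) : HasDerivAt (fun t => f (toMatrix (γ t * M)))
      (fderiv ℂ f (toMatrix (γ t * M)) (Z * toMatrix (γ t * M))) t := by
    have hexp := (hasDerivAt_exp_smul_const' (𝕂 := ℝ) Z t).mul_const (toMatrix M)
    rw [mul_assoc] at hexp
    exact ((hf.differentiable one_ne_zero).differentiableAt.hasFDerivAt.restrictScalars
      ℝ).comp_hasDerivAt t hexp
  have continuous_integrand (t : ℝ) : Continuous fun M : USp n => f (toMatrix (γ t * M)) :=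
    hf.continuous.comp (continuous_toMatrix.comp (continuous_const.mul continuous_id))
  have continuous_deriv := continuous_fderiv_comp_toMatrix hf Z
  obtain ⟨C, hC⟩ := (isCompact_range continuous_deriv).isBounded.exists_norm_le
  have deriv_integral := (hasDerivAt_integral_of_dominated_loc_of_deriv_le (μ := μ) (𝕜 := ℝ)
    (F := fun t M => f (toMatrix (γ t * M))) (x₀ := 0) (bound := fun _ => C) Filter.univ_mem
    (.of_forall fun t => (continuous_integrand t).aestronglyMeasurable)
    (integrable_of_continuous μ (continuous_integrand 0))
    (continuous_deriv.comp (continuous_const.mul continuous_id)).aestronglyMeasurable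
    (.of_forall fun M t _ => hC _ ⟨γ t * M, rfl⟩) (integrable_const C)
    (.of_forall fun M t _ => deriv_curve M t)).2
  simp only [integral_mul_left_eq_self (fun M => f (toMatrix M))] at deriv_integral
  rw [← deriv_integral.unique (hasDerivAt_const 0 _)]
  exact (integral_mul_left_eq_self
    (fun M => fderiv ℂ f (toMatrix M) (Z * toMatrix M)) (γ 0)).symm

-- The complex Lie algebra `sp` is the complexification of that of `USp n`.
theorem integral_fderiv_mul_toMatrix (hf : ContDiff ℂ 1 f) (hZ : Z ∈ sp (Fin n) ℂ) :
    ∫ M, fderiv ℂ f (toMatrix M) (Z * toMatrix M) ∂μ = 0 := by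
  have of_isSelfAdjoint {H : Matrix (Fin n ⊕ Fin n) (Fin n ⊕ Fin n) ℂ} (hH : H ∈ sp (Fin n) ℂ)
      (hsa : IsSelfAdjoint H) : ∫ M, fderiv ℂ f (toMatrix M) (H * toMatrix M) ∂μ = 0 := by
    have h := integral_fderiv_mul_toMatrix_of_mem_skewAdjoint μ hf
      (Submodule.smul_mem _ Complex.I hH) (hsa.smul_mem_skewAdjoint Complex.conj_I)
    simpa only [smul_mul_assoc, map_smul, smul_eq_mul, integral_const_mul, mul_eq_zero,
      Complex.I_ne_zero, false_or] using h
  have hRe : (ℜ Z : Matrix (Fin n ⊕ Fin n) (Fin n ⊕ Fin n) ℂ) ∈ sp (Fin n) ℂ := by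
    rw [realPart_apply_coe]
    exact Submodule.smul_mem _ _ (add_mem hZ (conjTranspose_mem_sp hZ))
  have hIm : (ℑ Z : Matrix (Fin n ⊕ Fin n) (Fin n ⊕ Fin n) ℂ) ∈ sp (Fin n) ℂ := by
    rw [imaginaryPart_apply_coe]
    refine Submodule.smul_mem _ (-Complex.I) ?_
    exact Submodule.smul_mem _ ((2⁻¹ : ℝ) : ℂ) (sub_mem hZ (conjTranspose_mem_sp hZ))
  rw [← realPart_add_I_smul_imaginaryPart Z]
  simp only [add_mul, smul_mul_assoc, map_add, map_smul, smul_eq_mul]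
  rw [integral_add (integrable_of_continuous μ (continuous_fderiv_comp_toMatrix hf _))
    ((integrable_of_continuous μ (continuous_fderiv_comp_toMatrix hf _)).const_mul _),
    integral_const_mul, of_isSelfAdjoint hRe (ℜ Z).2, of_isSelfAdjoint hIm (ℑ Z).2,
    mul_zero, add_zero]

end USp

/-! ### Derivatives of polynomials in traces of powers -/

section PolynomialDerivatives

variable {𝕜 E σ : Type*} [NontriviallyNormedField 𝕜] [NormedAddCommGroup E] [NormedSpace 𝕜 E]
  {g : σ → E → 𝕜}

theorem contDiff_aeval {r : WithTop ℕ∞} (hg : ∀ l, ContDiff 𝕜 r (g l)) (P : MvPolynomial σ 𝕜) :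
    ContDiff 𝕜 r fun y => aeval (fun l => g l y) P := by
  simp only [aeval_def, eval₂_eq]
  fun_prop

theorem fderiv_aeval_of_derivation {x v : E} (hg : ∀ l, DifferentiableAt 𝕜 (g l) x)
    (D : Derivation 𝕜 (MvPolynomial σ 𝕜) (MvPolynomial σ 𝕜))
    (hD : ∀ l, fderiv 𝕜 (g l) x v = aeval (fun l => g l x) (D (X l))) (P : MvPolynomial σ 𝕜) :
    fderiv 𝕜 (fun y => aeval (fun l => g l y) P) x v = aeval (fun l => g l x) (D P) := by
  have hdiff (Q : MvPolynomial σ 𝕜) :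
      DifferentiableAt 𝕜 (fun y => aeval (fun l => g l y) Q) x := by
    induction Q using MvPolynomial.induction_on with
    | C c => simp
    | add Q Q' hQ hQ' => simpa only [map_add] using hQ.fun_add hQ'
    | mul_X Q l hQ => simpa only [map_mul, aeval_X] using hQ.fun_mul (hg l)
  induction P using MvPolynomial.induction_on with
  | C c => simp
  | add P Q hP hQ =>
    simp only [map_add, ← hP, ← hQ]
    rw [fderiv_fun_add (hdiff P) (hdiff Q)]
    rfl
  | mul_X P l hP =>
    simp only [map_mul, aeval_X, Derivation.leibniz, map_add, smul_eq_mul, ← hP, ← hD]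
    rw [fderiv_fun_mul (hdiff P) (hg l)]
    rfl

theorem fderiv_clm_comp_pow {𝔸 : Type*} [NormedRing 𝔸] [NormedAlgebra 𝕜 𝔸]
    (L : 𝔸 →L[𝕜] E) (k : ℕ) (A V : 𝔸) :
    fderiv 𝕜 (fun B => L (B ^ k)) A V =
      ∑ i ∈ Finset.range k, L (A ^ (k - 1 - i) * V * A ^ i) := by
  have h : HasFDerivAt (fun B : 𝔸 => L (B ^ k)) _ A := L.hasFDerivAt.comp A (hasFDerivAt_pow' k)
  rw [h.fderiv]
  simp [mul_assoc]

end PolynomialDerivatives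

section TracePolynomials

open scoped Matrix.Norms.Operator

variable {ι 𝕜 : Type*} [Fintype ι] [DecidableEq ι] [NontriviallyNormedField 𝕜] [CompleteSpace 𝕜]

/-- Evaluation of polynomials at the traces of the powers of a matrix, `X l ↦ Tr (A ^ l)`. -/
noncomputable def aevalTracePow {R : Type*} [CommSemiring R] (A : Matrix ι ι R) :
    MvPolynomial ℕ R →ₐ[R] R :=
  aeval fun l => trace (A ^ l)

theorem aevalTracePow_X {R : Type*} [CommSemiring R] (A : Matrix ι ι R) (l : ℕ) :
    aevalTracePow A (X l) = trace (A ^ l) :=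
  aeval_X _ _

theorem contDiff_trace_pow {r : WithTop ℕ∞} (l : ℕ) :
    ContDiff 𝕜 r fun A : Matrix ι ι 𝕜 => trace (A ^ l) :=
  (traceLinearMap ι 𝕜 𝕜).toContinuousLinearMap.contDiff.comp (contDiff_id.pow l)

theorem contDiff_aevalTracePow {r : WithTop ℕ∞} (P : MvPolynomial ℕ 𝕜) :
    ContDiff 𝕜 r fun A : Matrix ι ι 𝕜 => aevalTracePow A P :=
  contDiff_aeval contDiff_trace_pow P

theorem fderiv_trace_pow (l : ℕ) (A Y : Matrix ι ι 𝕜) :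
    fderiv 𝕜 (fun B : Matrix ι ι 𝕜 => trace (B ^ l)) A (Y * A) = l * trace (A ^ l * Y) := by
  have summand (i) (hi : i ∈ Finset.range l) :
      trace (A ^ (l - 1 - i) * (Y * A) * A ^ i) = trace (A ^ l * Y) := by
    rw [Finset.mem_range] at hi
    rw [trace_mul_comm, ← Matrix.mul_assoc, ← pow_add, ← Matrix.mul_assoc, trace_mul_comm,
      ← Matrix.mul_assoc, ← pow_succ']
    congr 3
    lia
  refine (fderiv_clm_comp_pow (traceLinearMap ι 𝕜 𝕜).toContinuousLinearMap l A (Y * A)).trans ?_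
  exact (Finset.sum_congr rfl summand).trans (by simp)

theorem contDiff_pow_apply {r : WithTop ℕ∞} (k : ℕ) (b a : ι) :
    ContDiff 𝕜 r fun A : Matrix ι ι 𝕜 => (A ^ k) b a :=
  (entryLinearMap 𝕜 𝕜 b a).toContinuousLinearMap.contDiff.comp (contDiff_id.pow k)

theorem fderiv_pow_apply (k : ℕ) (A V : Matrix ι ι 𝕜) (b a : ι) :
    fderiv 𝕜 (fun B : Matrix ι ι 𝕜 => (B ^ k) b a) A V =
      ∑ i ∈ Finset.range k, (A ^ (k - 1 - i) * V * A ^ i) b a :=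
  fderiv_clm_comp_pow (entryLinearMap 𝕜 𝕜 b a).toContinuousLinearMap k A V

end TracePolynomials

/-! ### The loop equations for traces of powers -/

namespace USp

open LieAlgebra.Symplectic
open scoped Matrix.Norms.Operator

variable {n : ℕ}

theorem spPart_toMatrix_pow (M : USp n) (k : ℕ) :
    spPart (toMatrix M ^ k) = toMatrix M ^ k - toMatrix (M ^ k)⁻¹ := by
  rw [spPart_apply, ← map_pow, J_mul_transpose_toMatrix_mul_J, sub_eq_add_neg]

theorem sum_pow_mul_spPart_single_mul_pow (M : USp n) (k : ℕ) :
    ∑ b : Fin n ⊕ Fin n, ∑ a : Fin n ⊕ Fin n, ∑ i ∈ Finset.range k,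
      (toMatrix M ^ (k - 1 - i) * (spPart (single b a (1 : ℂ)) * toMatrix M) * toMatrix M ^ i) b a =
      aevalTracePow (toMatrix M) (loopPotential ℂ k) := by
  have summand (i) (hi : i ∈ Finset.range k) :
      (∑ b : Fin n ⊕ Fin n, ∑ a : Fin n ⊕ Fin n,
        (toMatrix M ^ (k - 1 - i) * (spPart (single b a (1 : ℂ)) * toMatrix M) *
          toMatrix M ^ i) b a) =
      trace (toMatrix M ^ (k - 1 - i)) * trace (toMatrix M ^ (k - (k - 1 - i))) +
        trace (toMatrix M ^ Nat.dist k (2 * (k - 1 - i))) := by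
    rw [Finset.mem_range] at hi
    have hk : k - (k - 1 - i) = i + 1 := by lia
    have hdist : Nat.dist k (2 * (k - 1 - i)) = Nat.dist (k - 1 - i) (i + 1) := by
      unfold Nat.dist; lia
    simp only [Matrix.mul_assoc, ← pow_succ']
    simp only [← Matrix.mul_assoc]
    rw [sum_mul_spPart_single_mul_apply, ← map_pow _ M (i + 1), J_mul_transpose_toMatrix_mul_J,
      Matrix.mul_neg, trace_neg, trace_toMatrix_pow_mul_inv, map_pow, hk, hdist, sub_neg_eq_add]
  simp_rw [Finset.sum_comm (t := Finset.range k)]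
  rw [Finset.sum_congr rfl summand]
  simp only [loopPotential, map_sum, map_add, map_mul, aevalTracePow_X]
  exact Finset.sum_range_reflect (fun i => trace (toMatrix M ^ i) * trace (toMatrix M ^ (k - i)) +
    trace (toMatrix M ^ Nat.dist k (2 * i))) k

theorem fderiv_aevalTracePow_spPart_mul (M : USp n) (k : ℕ) (P : MvPolynomial ℕ ℂ) :
    fderiv ℂ (fun A => aevalTracePow A P) (toMatrix M) (spPart (toMatrix M ^ k) * toMatrix M) =
      aevalTracePow (toMatrix M) (loopDerivation ℂ k P) := by
  refine fderiv_aeval_of_derivation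
    (fun l => (contDiff_trace_pow (r := 1) l).contDiffAt.differentiableAt one_ne_zero) _
    (fun l => ?_) P
  refine (fderiv_trace_pow l _ _).trans ?_
  rw [spPart_toMatrix_pow, Matrix.mul_sub, trace_sub, ← pow_add,
    trace_toMatrix_pow_mul_inv, loopDerivation_X]
  simp [add_comm, Nat.dist_comm]

theorem sum_fderiv_pow_apply_mul_aevalTracePow (M : USp n) (k : ℕ) (P : MvPolynomial ℕ ℂ) :
    ∑ b, ∑ a, fderiv ℂ (fun A => (A ^ k) b a * aevalTracePow A P) (toMatrix M)
      (spPart (single b a 1) * toMatrix M) = aevalTracePow (toMatrix M) (loopOperator ℂ k P) := by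
  have product_rule (b a) (V : Matrix (Fin n ⊕ Fin n) (Fin n ⊕ Fin n) ℂ) :
      fderiv ℂ (fun A => (A ^ k) b a * aevalTracePow A P) (toMatrix M) V =
        (toMatrix M ^ k) b a • fderiv ℂ (fun A => aevalTracePow A P) (toMatrix M) V +
          aevalTracePow (toMatrix M) P *
            ∑ i ∈ Finset.range k, (toMatrix M ^ (k - 1 - i) * V * toMatrix M ^ i) b a := by
    rw [← fderiv_pow_apply]
    exact congrArg (· V) (fderiv_fun_mul
      ((contDiff_pow_apply (r := 1) k b a).contDiffAt.differentiableAt one_ne_zero)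
      ((contDiff_aevalTracePow (r := 1) P).contDiffAt.differentiableAt one_ne_zero))
  have sum_smul : ∑ b, ∑ a, (toMatrix M ^ k) b a •
      fderiv ℂ (fun A => aevalTracePow A P) (toMatrix M) (spPart (single b a 1) * toMatrix M) =
        aevalTracePow (toMatrix M) (loopDerivation ℂ k P) := by
    rw [← fderiv_aevalTracePow_spPart_mul, ← sum_apply_smul_spPart_single (toMatrix M ^ k)]
    simp only [Finset.sum_mul, map_sum, smul_mul_assoc, map_smul]
  simp only [product_rule, Finset.sum_add_distrib, ← Finset.mul_sum]
  rw [sum_smul, sum_pow_mul_spPart_single_mul_pow, loopOperator_apply, map_add, map_mul,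
    mul_comm, add_comm]

variable (μ : Measure (USp n)) [IsFiniteMeasure μ] [μ.IsMulLeftInvariant]

-- Integration by parts for the vector fields `A ↦ (A ^ k) b a • spPart (single b a 1) * A`.
theorem integral_aevalTracePow_loopOperator (k : ℕ) (P : MvPolynomial ℕ ℂ) :
    ∫ M, aevalTracePow (toMatrix M) (loopOperator ℂ k P) ∂μ = 0 := by
  have contDiff_mul (b a : Fin n ⊕ Fin n) :
      ContDiff ℂ 1 fun A => (A ^ k) b a * aevalTracePow A P :=
    (contDiff_pow_apply k b a).mul (contDiff_aevalTracePow P)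
  have integrable (b a) := integrable_of_continuous μ
    (continuous_fderiv_comp_toMatrix (contDiff_mul b a) (spPart (single b a 1)))
  simp only [← sum_fderiv_pow_apply_mul_aevalTracePow]
  rw [integral_finsetSum _ fun b _ => integrable_finsetSum _ fun a _ => integrable b a]
  refine Finset.sum_eq_zero fun b _ => ?_
  rw [integral_finsetSum _ fun a _ => integrable b a]
  exact Finset.sum_eq_zero fun a _ =>
    integral_fderiv_mul_toMatrix μ (contDiff_mul b a) (spPart_mem_sp _)

end USp

/-! ### Moments of traces of powers -/

theorem map_X_add_C_pow {R : Type*} [CommSemiring R] (φ : MvPolynomial ℕ R →ₗ[R] R) (j : ℕ) (r : R)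
    (a : ℕ) : φ ((X j + C r) ^ a) = ∑ b ∈ Finset.range (a + 1),
      r ^ (a - b) * a.choose b * φ (powerMonomial R (Multiset.replicate b j)) := by
  have term (b : ℕ) : X j ^ b * C r ^ (a - b) * (a.choose b : MvPolynomial ℕ R) =
      (r ^ (a - b) * a.choose b : R) • powerMonomial R (Multiset.replicate b j) := by
    simp only [powerMonomial, Multiset.map_replicate, Multiset.prod_replicate, smul_eq_C_mul,
      map_mul, map_pow, map_natCast]
    ring
  simp only [add_pow, term, map_sum, map_smul, smul_eq_mul]

namespace USp

open scoped Matrix.Norms.Operator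

variable {n : ℕ} (μ : Measure (USp n))

theorem integrable_aevalTracePow [IsFiniteMeasure μ] (P : MvPolynomial ℕ ℂ) :
    Integrable (fun M => aevalTracePow (toMatrix M) P) μ :=
  integrable_of_continuous μ
    ((contDiff_aevalTracePow (r := 1) P).continuous.comp continuous_toMatrix)

/-- Expectation of polynomials in the traces of the powers of a random element of `USp n`. -/
noncomputable def traceFunctional [IsFiniteMeasure μ] : MvPolynomial ℕ ℂ →ₗ[ℂ] ℂ where
  toFun P := ∫ M, aevalTracePow (toMatrix M) P ∂μ
  map_add' P Q := by
    simp only [map_add]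
    exact integral_add (integrable_aevalTracePow μ P) (integrable_aevalTracePow μ Q)
  map_smul' c P := by
    simp only [map_smul]
    exact integral_smul c _

theorem traceFunctional_apply [IsFiniteMeasure μ] (P : MvPolynomial ℕ ℂ) :
    traceFunctional μ P = ∫ M, aevalTracePow (toMatrix M) P ∂μ := rfl

theorem solvesLoopEquations_traceFunctional [IsFiniteMeasure μ] [μ.IsMulLeftInvariant] :
    SolvesLoopEquations (2 * n : ℂ) (traceFunctional μ) where
  map_X_zero_mul f := by
    have trace_one : trace (1 : Matrix (Fin n ⊕ Fin n) (Fin n ⊕ Fin n) ℂ) = 2 * n := by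
      simp [two_mul]
    simp only [traceFunctional_apply, map_mul, aevalTracePow_X, pow_zero, trace_one,
      integral_const_mul]
  map_loopOperator := integral_aevalTracePow_loopOperator μ

variable [IsProbabilityMeasure μ] [μ.IsMulLeftInvariant]

theorem traceFunctional_powerMonomial {S : Multiset ℕ} (hS : S.sum ≤ 2 * n + 1) :
    traceFunctional μ (powerMonomial ℂ S) =
      gaussianFunctional (loopMean (2 * n : ℂ)) Nat.cast (powerMonomial ℂ S) := by
  have gaussian_one := gaussianFunctional_one (loopMean (2 * n : ℂ)) Nat.cast
  have gaussian_solves :=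
    (steinIdentity_gaussianFunctional (loopMean (2 * n : ℂ)) Nat.cast).solvesLoopEquations
      gaussian_one
  have norm_eq : ‖(2 * n : ℂ) + 1‖ = 2 * n + 1 := by
    simpa using Complex.norm_natCast (2 * n + 1)
  rw [← sub_eq_zero, ← LinearMap.sub_apply]
  refine ((solvesLoopEquations_traceFunctional μ).sub gaussian_solves).map_powerMonomial_eq_zero
    ?_ S ?_
  · simp [gaussian_one, traceFunctional_apply]
  · rw [norm_eq]
    exact_mod_cast Nat.lt_succ_of_le hS

theorem integral_trace_pow_add_evenIndicator_pow {j a : ℕ} (hj : 0 < j) (h : a * j ≤ 2 * n + 1) :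
    ∫ M : USp n, (trace (toMatrix M ^ j) + evenIndicator ℂ j) ^ a ∂μ =
      if Even a then (j : ℂ) ^ (a / 2) * (a - 1).doubleFactorial else 0 := by
  have gaussian := (steinIdentity_gaussianFunctional (loopMean (2 * n : ℂ)) Nat.cast).map_sub_C_pow
    (gaussianFunctional_one _ _) j a
  rw [loopMean_of_pos _ hj, map_neg, sub_neg_eq_add, map_X_add_C_pow] at gaussian
  have low_weight (b) (hb : b ∈ Finset.range (a + 1)) :
      (Multiset.replicate b j).sum ≤ 2 * n + 1 := by
    rw [Multiset.sum_replicate, smul_eq_mul]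
    exact (Nat.mul_le_mul_right j (Finset.mem_range_succ_iff.mp hb)).trans h
  rw [← gaussian, ← Finset.sum_congr rfl fun b hb =>
    congrArg (_ * ·) (traceFunctional_powerMonomial μ (low_weight b hb)), ← map_X_add_C_pow]
  simp [traceFunctional_apply, aevalTracePow]

end USp

theorem ofReal_re_trUSp {n : ℕ} (M : USp n) (j : ℕ) :
    ((trUSp M j).re : ℂ) = trace (USp.toMatrix M ^ j) := by
  have htr : trUSp M j = trace (USp.toMatrix (M ^ j)) := by
    rw [trUSp, zpow_natCast]
    rfl
  rw [htr, ← map_pow]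
  exact Complex.conj_eq_iff_re.mp (USp.star_trace_toMatrix (M ^ j))

theorem usp_four_moments_general {n j a : ℕ} (hj : 0 < j) (h : a * j ≤ 2 * n + 1)
    (μ : Measure (USp n)) [IsProbabilityMeasure μ] [μ.IsMulLeftInvariant] (W : USp n → ℝ)
    (hW : W = fun M => if Odd j then (trUSp M j).re / Real.sqrt j
      else ((trUSp M j).re + 1) / Real.sqrt j) :
    ∫ M, W M ^ a ∂μ = if Even a then ((a - 1).doubleFactorial : ℝ) else 0 := by
  have W_eq (M : USp n) :
      (W M : ℂ) = (trace (USp.toMatrix M ^ j) + evenIndicator ℂ j) / Real.sqrt j := by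
    rw [hW, ← ofReal_re_trUSp, evenIndicator]
    by_cases ho : Odd j <;> simp [ho, ← Nat.not_odd_iff_even]
  have sqrt_pow (d : ℕ) : (Real.sqrt j : ℂ) ^ (d + d) = (j : ℂ) ^ d := by
    rw [← two_mul, pow_mul, ← Complex.ofReal_pow, Real.sq_sqrt j.cast_nonneg,
      Complex.ofReal_natCast]
  have hj0 : (j : ℂ) ≠ 0 := Nat.cast_ne_zero.mpr hj.ne'
  apply Complex.ofReal_injective
  rw [← integral_complex_ofReal]
  simp only [Complex.ofReal_pow, W_eq, div_pow]
  rw [integral_div, USp.integral_trace_pow_add_evenIndicator_pow μ hj h]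
  split_ifs with ha
  · obtain ⟨d, rfl⟩ := ha
    rw [sqrt_pow, show (d + d) / 2 = d by lia, mul_div_cancel_left₀ _ (pow_ne_zero d hj0)]
    simp
  · simp

/-- For `4j ≤ 2n + 1` and Haar-distributed `M` in `USp(2n,ℂ)`, the first four moments of
`W = Tr(M^j)/√j` (`j` odd) or `W = (Tr(M^j) + 1)/√j` (`j` even) match those of a standard
normal: `E[W] = 0`, `E[W²] = 1`, `E[W³] = 0`, `E[W⁴] = 3`.  (The trace is real; `W` is
recorded via the real part.) -/
theorem usp_four_moments (n j : ℕ) (hn : 0 < n) (hj : 0 < j) (h : 4 * j ≤ 2 * n + 1)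
    (μ : Measure (USp n)) [IsProbabilityMeasure μ] [μ.IsHaarMeasure]
    (W : USp n → ℝ)
    (hW : W = fun M => if Odd j then (trUSp M j).re / Real.sqrt j
      else ((trUSp M j).re + 1) / Real.sqrt j) :
    (∫ M, W M ∂μ = 0) ∧ (∫ M, (W M) ^ 2 ∂μ = 1) ∧
      (∫ M, (W M) ^ 3 ∂μ = 0) ∧ (∫ M, (W M) ^ 4 ∂μ = 3) := by
  have moment (a : ℕ) (ha : a ≤ 4) := usp_four_moments_general hj
    ((Nat.mul_le_mul_right j ha).trans h) μ W hW
  exact ⟨by simpa using moment 1 (by simp), by simpa [Nat.even_iff] using moment 2 (by simp),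
    by simpa [Nat.even_iff] using moment 3 (by simp),
    by simpa [Nat.even_iff, Nat.doubleFactorial] using moment 4 le_rfl⟩
end

section
/- Let n and j be positive integers with 4j ≤ n, let M be distributed according to the Haar probability measure on U(n,ℂ), and set W = (Tr(M^j) + conj(Tr(M^j)))/√(2j), a real random variable. Then the first four moments of W match those of a standard normal random variable: E[W] = 0, E[W²] = 1, E[W³] = 0, and E[W⁴] = 3. -/
open MeasureTheory ProbabilityTheory Matrix

/-- The trace of the `k`-th power (`k : ℤ`, negative powers via the inverse) of an
element of the unitary group `U(n,ℂ)`. -/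
noncomputable def trU {n : ℕ} (M : Matrix.unitaryGroup (Fin n) ℂ) (k : ℤ) : ℂ :=
  Matrix.trace (((M ^ k : Matrix.unitaryGroup (Fin n) ℂ)) : Matrix (Fin n) (Fin n) ℂ)

/-!
Left translation by `exp (itH)`, with `H` Hermitian, preserves Haar measure, so the derivative at
`t = 0` of the translates of a smooth function has integral zero. By `ℂ`-linearity the gradient of
such a function then pairs to zero with every matrix; for `f M * tr (E_ji M ^ k)`, paired with the
matrix unit `E_ij` and summed over `i, j`, this is a Schwinger-Dyson equation. If `f` is a product
of traces `tr (M ^ m)`, `m ∈ s`, it is a linear relation, the loop equation, between the moments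
indexed by multisets of integers: `tr (M ^ k)` splits into `tr (M ^ l) * tr (M ^ (k - l))` or
merges with one of the factors of `f`.

The moments of independent complex Gaussians `Z k` of variance `k`, with `Z (-k)` the conjugate of
`Z k` and `Z 0 = n`, satisfy the same equations. In the loop equation the moment of `k ::ₘ s`
carries the coefficient `n`, while the absolute values of the other coefficients at moments of the
same positive degree `d` add up to `d - 1`. For `d ≤ n` the system is thus diagonally dominant and
its solution is unique, so that the two families of moments agree.
-/

open Complex selfAdjoint
open scoped Nat

lemma integrable_of_continuous_of_compactSpace {X E : Type*} [TopologicalSpace X] [CompactSpace X]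
    [MeasurableSpace X] [OpensMeasurableSpace X] [NormedAddCommGroup E]
    [SecondCountableTopologyEither X E] {f : X → E} (hf : Continuous f)
    (μ : Measure X) [IsFiniteMeasureOnCompacts μ] : Integrable f μ :=
  hf.integrable_of_hasCompactSupport (.of_compactSpace f)

lemma integral_multiset_sum_map {α X E : Type*} [MeasurableSpace X] [NormedAddCommGroup E]
    [NormedSpace ℝ E] {μ : Measure X} {f : α → X → E} {s : Multiset α}
    (hf : ∀ a ∈ s, Integrable (f a) μ) :
    ∫ x, (s.map fun a => f a x).sum ∂μ = (s.map fun a => ∫ x, f a x ∂μ).sum := by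
  classical
  simp only [Finset.sum_multiset_map_count, ← Nat.cast_smul_eq_nsmul ℝ]
  rw [integral_finsetSum _ fun a ha => (hf a (Multiset.mem_toFinset.1 ha)).fun_smul _]
  simp only [integral_smul]

section SchwingerDyson

open scoped Matrix.Norms.L2Operator

variable {ι : Type*} [Fintype ι] [DecidableEq ι]

instance matrix_borelSpace {m n α : Type*} [Countable m] [Countable n] [TopologicalSpace α]
    [SecondCountableTopology α] [MeasurableSpace α] [BorelSpace α] : BorelSpace (Matrix m n α) :=
  inferInstanceAs (BorelSpace (m → n → α))

instance unitaryGroup_compactSpace : CompactSpace (unitaryGroup ι ℂ) := by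
  refine isCompact_iff_compactSpace.1
    (Metric.isCompact_of_isClosed_isBounded isClosed_unitary ?_)
  refine isBounded_iff_forall_norm_le.2 ⟨1, fun U hU => ?_⟩
  cases subsingleton_or_nontrivial (Matrix ι ι ℂ)
  · simp [Subsingleton.elim U 0]
  · exact (CStarRing.norm_of_mem_unitary hU).le

/-- `G` is the complex gradient of `f` on the unitary group with respect to left translations: the
derivative of `f` along `exp (itH) * M` at `t = 0` is `i * tr (H * G M)`, for all Hermitian `H`.
Encoding the derivative by the trace pairing makes it extend `ℂ`-linearly from Hermitian `H` to all
matrices. -/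
def HasLeftGradient (f : unitaryGroup ι ℂ → ℂ) (G : unitaryGroup ι ℂ → Matrix ι ι ℂ) : Prop :=
  ∀ (H : selfAdjoint (Matrix ι ι ℂ)) (M : unitaryGroup ι ℂ),
    HasDerivAt (fun t : ℝ => f (expUnitary (t • H) * M)) (I * trace (H.1 * G M)) 0

lemma expUnitary_add_smul (H : selfAdjoint (Matrix ι ι ℂ)) (s t : ℝ) :
    expUnitary ((s + t) • H) = expUnitary (s • H) * expUnitary (t • H) := by
  rw [add_smul]
  exact (((Commute.refl (H : Matrix ι ι ℂ)).smul_left s).smul_right t).expUnitary_add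

lemma hasDerivAt_expUnitary_smul (H : selfAdjoint (Matrix ι ι ℂ)) :
    HasDerivAt (fun t : ℝ => (expUnitary (t • H) : Matrix ι ι ℂ)) (I • H.1) 0 := by
  simpa [smul_comm I] using hasDerivAt_exp_smul_const (𝕂 := ℝ) (I • H.1) 0

namespace HasLeftGradient

variable {f g : unitaryGroup ι ℂ → ℂ} {F G : unitaryGroup ι ℂ → Matrix ι ι ℂ}

lemma mul (hf : HasLeftGradient f F) (hg : HasLeftGradient g G) :
    HasLeftGradient (fun M => f M * g M) (fun M => g M • F M + f M • G M) := by
  intro H M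
  refine ((hf H M).mul (hg H M)).congr_deriv ?_
  simp only [zero_smul, expUnitary_zero, one_mul, Matrix.mul_add, Matrix.mul_smul, trace_add,
    trace_smul, smul_eq_mul]
  ring

lemma conj (hf : HasLeftGradient f F) :
    HasLeftGradient (fun M => starRingEnd ℂ (f M)) (fun M => -(F M)ᴴ) := by
  intro H M
  refine (hf H M).star.congr_deriv ?_
  have hH : (H : Matrix ι ι ℂ)ᴴ = H := H.2
  rw [star_mul', ← trace_conjTranspose, conjTranspose_mul, hH, trace_mul_comm]
  simp

lemma multiset_prod {α : Type*} [DecidableEq α] {f : α → unitaryGroup ι ℂ → ℂ}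
    {F : α → unitaryGroup ι ℂ → Matrix ι ι ℂ} {s : Multiset α}
    (h : ∀ a ∈ s, HasLeftGradient (f a) (F a)) :
    HasLeftGradient (fun M => (s.map fun a => f a M).prod)
      (fun M => (s.map fun a => ((s.erase a).map fun b => f b M).prod • F a M).sum) := by
  intro H M
  refine (HasFDerivAt.multiset_prod fun a ha => (h a ha H M).hasFDerivAt).hasDerivAt.congr_deriv ?_
  let pairing := I • (traceLinearMap ι ℂ ℂ ∘ₗ LinearMap.mulLeft ℂ H.1)
  change _ = pairing _
  rw [← ContinuousLinearMap.apply_apply (1 : ℝ), map_multiset_sum, map_multiset_sum,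
    Multiset.map_map, Multiset.map_map]
  congr 1
  refine Multiset.map_congr rfl fun a _ => ?_
  simp only [Function.comp_apply, ContinuousLinearMap.apply_apply, _root_.smul_apply,
    ContinuousLinearMap.toSpanSingleton_apply, one_smul, zero_smul, expUnitary_zero, one_mul,
    LinearMap.smul_apply, LinearMap.comp_apply, map_smul, LinearMap.mulLeft_apply,
    traceLinearMap_apply, smul_eq_mul, pairing]

protected lemma hasDerivAt (hf : HasLeftGradient f F) (H : selfAdjoint (Matrix ι ι ℂ))
    (M : unitaryGroup ι ℂ) (t : ℝ) :
    HasDerivAt (fun t : ℝ => f (expUnitary (t • H) * M))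
      (I * trace (H.1 * F (expUnitary (t • H) * M))) t := by
  have shifted := (show HasDerivAt _ _ (t - t) from (sub_self t).symm ▸
    hf H (expUnitary (t • H) * M)).comp_sub_const t t
  refine shifted.congr_of_eventuallyEq (.of_forall fun s => ?_)
  simp only [← mul_assoc, ← expUnitary_add_smul, sub_add_cancel]

variable (μ : Measure (unitaryGroup ι ℂ)) [IsFiniteMeasure μ] [μ.IsMulLeftInvariant]

lemma integral_trace_selfAdjoint_mul (hf : HasLeftGradient f F) (hfc : Continuous f)
    (hFc : Continuous F) (H : selfAdjoint (Matrix ι ι ℂ)) :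
    ∫ M, trace (H.1 * F M) ∂μ = 0 := by
  have hF' : Continuous fun M => I * trace (H.1 * F M) := by fun_prop
  obtain ⟨C, hC⟩ := isCompact_univ.exists_bound_of_continuousOn hF'.continuousOn
  have key := (hasDerivAt_integral_of_dominated_loc_of_deriv_le (μ := μ) (bound := fun _ => C)
    (F := fun t M => f (expUnitary (t • H) * M)) (x₀ := (0 : ℝ)) Filter.univ_mem
    (.of_forall fun t => (by fun_prop : Continuous _).aestronglyMeasurable)
    (integrable_of_continuous_of_compactSpace (by fun_prop) μ)
    (hF'.comp (continuous_const_mul _)).aestronglyMeasurable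
    (.of_forall fun M t _ => hC _ trivial) (integrable_const C)
    (.of_forall fun M t _ => hf.hasDerivAt H M t)).2
  simp only [integral_mul_left_eq_self] at key
  simpa [integral_const_mul] using key.unique (hasDerivAt_const _ _)

theorem integral_trace_mul (hf : HasLeftGradient f F) (hfc : Continuous f) (hFc : Continuous F)
    (X : Matrix ι ι ℂ) : ∫ M, trace (X * F M) ∂μ = 0 := by
  have integrable (Y : Matrix ι ι ℂ) : Integrable (fun M => trace (Y * F M)) μ :=
    integrable_of_continuous_of_compactSpace (by fun_prop) μ
  conv_lhs => rw [← realPart_add_I_smul_imaginaryPart X]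
  simp only [Matrix.add_mul, trace_add, Matrix.smul_mul, trace_smul, smul_eq_mul]
  rw [integral_add (integrable _) ((integrable _).const_mul I), integral_const_mul,
    hf.integral_trace_selfAdjoint_mul μ hfc hFc, hf.integral_trace_selfAdjoint_mul μ hfc hFc,
    mul_zero, add_zero]

end HasLeftGradient

lemma hasLeftGradient_trace_mul_pow (Y : Matrix ι ι ℂ) (k : ℕ) :
    HasLeftGradient (fun M => trace (Y * (M : Matrix ι ι ℂ) ^ k))
      (fun M => ∑ l ∈ Finset.range k,
        (M : Matrix ι ι ℂ) ^ (k - l) * Y * (M : Matrix ι ι ℂ) ^ l) := by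
  intro H M
  have power := ((hasDerivAt_expUnitary_smul H).mul_const (M : Matrix ι ι ℂ)).pow' k
  have trace_deriv := ((traceLinearMap ι ℝ ℂ ∘ₗ LinearMap.mulLeft ℝ Y).toContinuousLinearMap
    |>.hasFDerivAt).comp_hasDerivAt (0 : ℝ) power
  refine trace_deriv.congr_deriv ?_
  change trace (Y * ∑ i ∈ Finset.range k, _) = I * trace (H.1 * ∑ l ∈ Finset.range k, _)
  rw [← Finset.sum_range_reflect, Finset.mul_sum, Finset.mul_sum, trace_sum, trace_sum,
    Finset.mul_sum]
  refine Finset.sum_congr rfl fun l hl => ?_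
  have hlk : l < k := Finset.mem_range.1 hl
  rw [Nat.pred_eq_sub_one, show k - 1 - (k - 1 - l) = l by omega,
    show k - l = k - 1 - l + 1 by omega, pow_succ']
  simp only [zero_smul, expUnitary_zero, OneMemClass.coe_one, one_mul, Matrix.smul_mul,
    Matrix.mul_smul, trace_smul, smul_eq_mul, Matrix.mul_assoc]
  rw [← Matrix.mul_assoc Y, trace_mul_comm]
  simp only [Matrix.mul_assoc]

lemma sum_trace_single_mul_mul_single_mul (A B : Matrix ι ι ℂ) :
    ∑ i, ∑ j, trace (single i j 1 * (A * single j i 1 * B)) = trace A * trace B := by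
  simp only [trace_single_mul, one_smul]
  simp only [Matrix.mul_apply, single_apply, ite_and, mul_ite, mul_one, mul_zero, Finset.sum_ite_eq,
    Finset.mem_univ, if_true, ite_mul, zero_mul, trace, diag_apply, Finset.sum_mul_sum]
  exact Finset.sum_comm

lemma sum_trace_single_mul_mul_trace_single_mul (A B : Matrix ι ι ℂ) :
    ∑ i, ∑ j, trace (single j i 1 * A) * trace (single i j 1 * B) = trace (A * B) := by
  simp only [trace_single_mul, one_smul]
  simp only [trace, diag_apply, Matrix.mul_apply]

theorem HasLeftGradient.schwinger_dyson (μ : Measure (unitaryGroup ι ℂ)) [IsFiniteMeasure μ]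
    [μ.IsMulLeftInvariant] {f : unitaryGroup ι ℂ → ℂ} {F : unitaryGroup ι ℂ → Matrix ι ι ℂ}
    (hf : HasLeftGradient f F) (hfc : Continuous f) (hFc : Continuous F) (k : ℕ) :
    ∫ M, ((∑ l ∈ Finset.range k,
      trace ((M : Matrix ι ι ℂ) ^ (k - l)) * trace ((M : Matrix ι ι ℂ) ^ l)) * f M
      + trace ((M : Matrix ι ι ℂ) ^ k * F M)) ∂μ = 0 := by
  let T (Y : Matrix ι ι ℂ) (M : unitaryGroup ι ℂ) : Matrix ι ι ℂ :=
      f M • ∑ l ∈ Finset.range k, (M : Matrix ι ι ℂ) ^ (k - l) * Y * (M : Matrix ι ι ℂ) ^ l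
      + trace (Y * (M : Matrix ι ι ℂ) ^ k) • F M
  have hT (Y) : Continuous (T Y) := by fun_prop
  have integrable (i j : ι) : Integrable (fun M => trace (single i j 1 * T (single j i 1) M)) μ :=
    integrable_of_continuous_of_compactSpace (by fun_prop) μ
  have vanish (i j : ι) : ∫ M, trace (single i j 1 * T (single j i 1) M) ∂μ = 0 :=
    ((hasLeftGradient_trace_mul_pow _ k).mul hf).integral_trace_mul μ (by fun_prop) (hT _) _
  have contraction (M : unitaryGroup ι ℂ) : ∑ i, ∑ j, trace (single i j 1 * T (single j i 1) M) =
      (∑ l ∈ Finset.range k,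
      trace ((M : Matrix ι ι ℂ) ^ (k - l)) * trace ((M : Matrix ι ι ℂ) ^ l)) * f M
      + trace ((M : Matrix ι ι ℂ) ^ k * F M) := by
    simp only [T, Matrix.mul_add, Matrix.mul_smul, Matrix.mul_sum, trace_add, trace_smul, trace_sum,
      smul_eq_mul, Finset.sum_add_distrib]
    simp only [← Finset.mul_sum]
    rw [sum_trace_single_mul_mul_trace_single_mul, mul_comm (f M)]
    congr 2
    simp_rw [Finset.sum_comm (s := Finset.univ) (t := Finset.range k)]
    exact Finset.sum_congr rfl fun l _ => sum_trace_single_mul_mul_single_mul _ _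
  simp_rw [← contraction]
  rw [integral_finsetSum _ fun i _ => integrable_finsetSum _ fun j _ => integrable i j]
  simp_rw [integral_finsetSum _ fun j _ => integrable _ j, vanish, Finset.sum_const_zero]

end SchwingerDyson

section TraceMoments

variable {n : ℕ}

lemma trU_natCast (M : unitaryGroup (Fin n) ℂ) (k : ℕ) :
    trU M k = trace ((M : Matrix (Fin n) (Fin n) ℂ) ^ k) := by
  rw [trU, zpow_natCast]
  rfl

lemma trU_zero (M : unitaryGroup (Fin n) ℂ) : trU M 0 = n := by
  simp [trU]

lemma trU_neg (M : unitaryGroup (Fin n) ℂ) (m : ℤ) :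
    trU M (-m) = starRingEnd ℂ (trU M m) := by
  rw [trU, _root_.zpow_neg, ← Unitary.star_eq_inv]
  exact trace_conjTranspose _

lemma continuous_trU (m : ℤ) : Continuous fun M : unitaryGroup (Fin n) ℂ => trU M m := by
  unfold trU
  fun_prop

lemma hasLeftGradient_trU (m : ℤ) :
    HasLeftGradient (fun M : unitaryGroup (Fin n) ℂ => trU M m)
      (fun M => (m : ℂ) • ((M ^ m : unitaryGroup (Fin n) ℂ) : Matrix (Fin n) (Fin n) ℂ)) := by
  have nat_case (k : ℕ) : HasLeftGradient (fun M : unitaryGroup (Fin n) ℂ => trU M k)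
      (fun M => (k : ℂ) • (M : Matrix (Fin n) (Fin n) ℂ) ^ k) := by
    convert hasLeftGradient_trace_mul_pow (1 : Matrix (Fin n) (Fin n) ℂ) k using 2 with M M
    · rw [trU_natCast, one_mul]
    · rw [Finset.sum_congr rfl fun l hl => show
        (M : Matrix (Fin n) (Fin n) ℂ) ^ (k - l) * 1 * (M : Matrix (Fin n) (Fin n) ℂ) ^ l =
          (M : Matrix (Fin n) (Fin n) ℂ) ^ k by
        rw [mul_one, pow_sub_mul_pow _ (Finset.mem_range.1 hl).le], Finset.sum_const,
        Finset.card_range, Nat.cast_smul_eq_nsmul]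
  obtain ⟨k, rfl | rfl⟩ := m.eq_nat_or_neg
  · simpa using nat_case k
  · convert (nat_case k).conj using 2 with M M
    · exact trU_neg M k
    · rw [_root_.zpow_neg, ← Unitary.star_eq_inv, zpow_natCast]
      simp [star_eq_conjTranspose]

/-- The product of the traces `tr (M ^ m)`, `m ∈ s`. -/
noncomputable def traceProd (s : Multiset ℤ) (M : unitaryGroup (Fin n) ℂ) : ℂ :=
  (s.map (trU M)).prod

lemma traceProd_cons (m : ℤ) (s : Multiset ℤ) (M : unitaryGroup (Fin n) ℂ) :
    traceProd (m ::ₘ s) M = trU M m * traceProd s M := by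
  simp [traceProd]

lemma continuous_traceProd (s : Multiset ℤ) :
    Continuous (traceProd s : unitaryGroup (Fin n) ℂ → ℂ) :=
  continuous_multiset_prod _ fun m _ => continuous_trU m

/-- The joint moment of the traces of powers indexed by `s`; since `trU M (-m)` is the conjugate of
`trU M m`, mixed moments of traces and their conjugates are included. -/
noncomputable def traceMoment (μ : Measure (unitaryGroup (Fin n) ℂ)) (s : Multiset ℤ) : ℂ :=
  ∫ M, traceProd s M ∂μ

lemma hasLeftGradient_traceProd (s : Multiset ℤ) :
    HasLeftGradient (traceProd s) (fun M : unitaryGroup (Fin n) ℂ =>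
      (s.map fun m => traceProd (s.erase m) M •
        (m : ℂ) • ((M ^ m : unitaryGroup (Fin n) ℂ) : Matrix (Fin n) (Fin n) ℂ)).sum) :=
  HasLeftGradient.multiset_prod fun m _ => hasLeftGradient_trU m

variable (μ : Measure (unitaryGroup (Fin n) ℂ))

lemma traceMoment_zero [IsProbabilityMeasure μ] : traceMoment μ 0 = 1 := by
  simp [traceMoment, traceProd]

lemma traceMoment_zero_cons (s : Multiset ℤ) :
    traceMoment μ (0 ::ₘ s) = n * traceMoment μ s := by
  simp only [traceMoment, traceProd_cons, trU_zero, integral_const_mul]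

theorem traceMoment_loop [IsFiniteMeasure μ] [μ.IsMulLeftInvariant] (k : ℕ) (s : Multiset ℤ) :
    ∑ l ∈ Finset.range k, traceMoment μ ((l : ℤ) ::ₘ ((k : ℤ) - l) ::ₘ s) +
      (s.map fun m : ℤ => (m : ℂ) * traceMoment μ (((k : ℤ) + m) ::ₘ s.erase m)).sum = 0 := by
  have integrable (t : Multiset ℤ) : Integrable (traceProd t) μ :=
    integrable_of_continuous_of_compactSpace (continuous_traceProd t) μ
  have splitting (M : unitaryGroup (Fin n) ℂ) (l : ℕ) (hl : l ∈ Finset.range k) :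
      trace ((M : Matrix (Fin n) (Fin n) ℂ) ^ (k - l)) * trace ((M : Matrix (Fin n) (Fin n) ℂ) ^ l)
        * traceProd s M = traceProd ((l : ℤ) ::ₘ ((k : ℤ) - l) ::ₘ s) M := by
    rw [← Nat.cast_sub (Finset.mem_range.1 hl).le, traceProd_cons, traceProd_cons, trU_natCast,
      trU_natCast]
    ring
  have merging (M : unitaryGroup (Fin n) ℂ) (m : ℤ) :
      trace ((M : Matrix (Fin n) (Fin n) ℂ) ^ k * (traceProd (s.erase m) M •
        (m : ℂ) • ((M ^ m : unitaryGroup (Fin n) ℂ) : Matrix (Fin n) (Fin n) ℂ))) =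
      m * traceProd (((k : ℤ) + m) ::ₘ s.erase m) M := by
    rw [traceProd_cons, trU, _root_.zpow_add, zpow_natCast]
    simp only [Submonoid.coe_mul, SubmonoidClass.coe_pow, Matrix.mul_smul, trace_smul, smul_eq_mul]
    ring
  have gradient_continuous := continuous_multiset_sum s fun m _ =>
    (continuous_traceProd (n := n) (s.erase m)).smul
      ((continuous_subtype_val.comp (continuous_zpow m)).const_smul (m : ℂ))
  have equation := (hasLeftGradient_traceProd s).schwinger_dyson μ (continuous_traceProd s)
    gradient_continuous k
  simp_rw [Finset.sum_mul, Finset.sum_congr rfl (splitting _), ← Multiset.sum_map_mul_left,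
    trace_multiset_sum, Multiset.map_map, Function.comp_def, merging] at equation
  rw [integral_add (integrable_finsetSum _ fun l _ => integrable _)
      (integrable_of_continuous_of_compactSpace (continuous_multiset_sum _ fun m _ =>
        (continuous_traceProd _).const_mul _) μ),
    integral_finsetSum _ fun l _ => integrable _,
    integral_multiset_sum_map fun m _ => (integrable _).const_mul _] at equation
  simpa only [traceMoment, integral_const_mul] using equation

end TraceMoments

section LoopEquations

/-- The positive degree of a multiset of integers, the sum of its positive members (`Int.toNat` is
the positive part). It is the quantity on which the loop equations are solved by induction. -/
def posDeg (s : Multiset ℤ) : ℕ :=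
  (s.map Int.toNat).sum

lemma posDeg_cons (m : ℤ) (s : Multiset ℤ) : posDeg (m ::ₘ s) = m.toNat + posDeg s := by
  simp [posDeg]

lemma posDeg_eq_zero_iff {s : Multiset ℤ} : posDeg s = 0 ↔ ∀ m ∈ s, m ≤ 0 := by
  simp [posDeg, Multiset.sum_eq_zero_iff]

lemma sum_map_toNat_filter_pos (s : Multiset ℤ) :
    ((s.filter (0 < ·)).map Int.toNat).sum = posDeg s := by
  induction s using Multiset.induction_on with
  | empty => rfl
  | cons m s ih =>
    by_cases hm : 0 < m
    · simp [hm, posDeg_cons, ih]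
    · simp [hm, posDeg_cons, ih, not_lt.1 hm]

lemma finite_setOf_posDeg_eq (d : ℕ) (u : Multiset ℤ) :
    {s | posDeg s = d ∧ s.filter (¬ 0 < ·) = u}.Finite := by
  refine (Set.finite_range fun p : d.Partition => p.parts.map ((↑) : ℕ → ℤ) + u).subset ?_
  rintro s ⟨hd, hu⟩
  refine ⟨⟨(s.filter (0 < ·)).map Int.toNat, ?_, ?_⟩, ?_⟩
  · rintro i hi
    obtain ⟨m, hm, rfl⟩ := Multiset.mem_map.1 hi
    exact Int.lt_toNat.2 (Multiset.mem_filter.1 hm).2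
  · rw [sum_map_toNat_filter_pos, hd]
  · have cast_toNat : ((s.filter (0 < ·)).map Int.toNat).map ((↑) : ℕ → ℤ) = s.filter (0 < ·) := by
      rw [Multiset.map_map]
      refine (Multiset.map_congr rfl fun m hm => ?_).trans (Multiset.map_id _)
      exact Int.toNat_of_nonneg (Multiset.mem_filter.1 hm).2.le
    simp only [cast_toNat]
    rw [← hu, Multiset.filter_add_not]

/-- The loop equations of the unitary group `U(n)`: the linear relations between the trace moments
of an invariant measure, for an arbitrary function `D` of the multiset of exponents. -/
structure IsLoopSolution (n : ℕ) (D : Multiset ℤ → ℂ) : Prop where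
  zero_cons (s : Multiset ℤ) : D (0 ::ₘ s) = n * D s
  loop (k : ℕ) (s : Multiset ℤ) :
    ∑ l ∈ Finset.range k, D ((l : ℤ) ::ₘ ((k : ℤ) - l) ::ₘ s) +
      (s.map fun m : ℤ => (m : ℂ) * D (((k : ℤ) + m) ::ₘ s.erase m)).sum = 0

lemma isLoopSolution_traceMoment {n : ℕ} (μ : Measure (unitaryGroup (Fin n) ℂ))
    [IsFiniteMeasure μ] [μ.IsMulLeftInvariant] : IsLoopSolution n (traceMoment μ) :=
  ⟨traceMoment_zero_cons μ, traceMoment_loop μ⟩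

namespace IsLoopSolution

variable {n : ℕ} {D E : Multiset ℤ → ℂ}

lemma sub (hD : IsLoopSolution n D) (hE : IsLoopSolution n E) : IsLoopSolution n (D - E) where
  zero_cons s := by simp only [Pi.sub_apply, hD.zero_cons, hE.zero_cons, mul_sub]
  loop k s := by
    simp only [Pi.sub_apply, mul_sub, Finset.sum_sub_distrib, Multiset.sum_map_sub]
    linear_combination hD.loop k s - hE.loop k s

lemma eq_zero_of_sum_ne_zero (hD : IsLoopSolution n D) {s : Multiset ℤ} (hs : s.sum ≠ 0) :
    D s = 0 := by
  have homogeneity : (s.sum : ℂ) * D s = 0 := by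
    rw [← hD.loop 0 s, Finset.sum_range_zero, zero_add, Int.cast_multiset_sum,
      ← Multiset.sum_map_mul_right]
    refine congrArg _ (Multiset.map_congr rfl fun m hm => ?_)
    rw [Nat.cast_zero, zero_add, Multiset.cons_erase hm]
  exact (mul_eq_zero.1 homogeneity).resolve_left (Int.cast_ne_zero.2 hs)

lemma eq_zero_of_posDeg_eq_zero (hD : IsLoopSolution n D) (h0 : D 0 = 0) {s : Multiset ℤ}
    (hs : posDeg s = 0) : D s = 0 := by
  induction s using Multiset.induction_on with
  | empty => exact h0
  | cons m s ih =>
    have nonpos := posDeg_eq_zero_iff.1 hs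
    obtain rfl | hm := eq_or_ne m 0
    · rw [hD.zero_cons, ih (by simpa [posDeg_cons] using hs), mul_zero]
    · refine hD.eq_zero_of_sum_ne_zero ?_
      have : m < 0 := (nonpos m (Multiset.mem_cons_self m s)).lt_of_ne hm
      have : s.sum ≤ 0 := Multiset.sum_induction (· ≤ 0) s (fun _ _ => add_nonpos) le_rfl
        fun b hb => nonpos b (Multiset.mem_cons_of_mem hb)
      rw [Multiset.sum_cons]
      omega

lemma mul_norm_cons_le (hD : IsLoopSolution n D) (k : ℕ) (s : Multiset ℤ) {C : ℝ}
    (split : ∀ a b : ℤ, 0 < a → 0 < b → a + b = k + 1 → ‖D (a ::ₘ b ::ₘ s)‖ ≤ C)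
    (merge_pos : ∀ m ∈ s, 0 < m → ‖D ((k + 1 + m) ::ₘ s.erase m)‖ ≤ C)
    (merge_neg : ∀ m ∈ s, m < 0 → D ((k + 1 + m) ::ₘ s.erase m) = 0) :
    n * ‖D ((k + 1) ::ₘ s)‖ ≤ (k + posDeg s) * C := by
  have equation := hD.loop (k + 1) s
  rw [Finset.sum_range_succ'] at equation
  push_cast at equation
  rw [sub_zero, hD.zero_cons] at equation
  have split_le : ‖∑ l ∈ Finset.range k,
      D (((l : ℤ) + 1) ::ₘ ((k : ℤ) + 1 - (l + 1)) ::ₘ s)‖ ≤ k * C := by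
    refine (norm_sum_le_of_le (Finset.range k) (n := fun _ => C) fun l hl => ?_).trans_eq (by simp)
    have hlk : l < k := Finset.mem_range.1 hl
    exact split _ _ (by omega) (by omega) (by ring)
  have merge_le : ‖(s.map fun m : ℤ => (m : ℂ) * D (((k : ℤ) + 1 + m) ::ₘ s.erase m)).sum‖ ≤
      posDeg s * C := by
    refine (norm_multiset_sum_le _).trans ?_
    rw [Multiset.map_map, posDeg, Nat.cast_multiset_sum, Multiset.map_map,
      ← Multiset.sum_map_mul_right]
    refine Multiset.sum_map_le_sum_map _ _ fun m hm => ?_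
    obtain hneg | rfl | hpos := lt_trichotomy m 0
    · simp [merge_neg m hm hneg, Int.toNat_of_nonpos hneg.le]
    · simp
    · have cast_toNat : (m.toNat : ℝ) = ‖(m : ℂ)‖ := by
        rw [Complex.norm_intCast, abs_of_pos (by exact_mod_cast hpos)]
        exact_mod_cast Int.toNat_of_nonneg hpos.le
      simp only [Function.comp_apply, norm_mul, cast_toNat]
      gcongr
      exact merge_pos m hm hpos
  calc n * ‖D ((k + 1) ::ₘ s)‖ = ‖n * D ((k + 1) ::ₘ s)‖ := by simp
    _ ≤ k * C + posDeg s * C := by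
      rw [add_right_comm] at equation
      rw [eq_neg_of_add_eq_zero_right equation, norm_neg]
      exact (norm_add_le _ _).trans (add_le_add split_le merge_le)
    _ = (k + posDeg s) * C := by ring

theorem eq_zero (hD : IsLoopSolution n D) (h0 : D 0 = 0) {s : Multiset ℤ} (hs : posDeg s ≤ n) :
    D s = 0 := by
  induction hd : posDeg s using Nat.strong_induction_on generalizing s with | _ d ih
  obtain rfl | hdpos := d.eq_zero_or_pos
  · exact hD.eq_zero_of_posDeg_eq_zero h0 hd
  obtain ⟨t, ⟨htd, htu⟩, maximal⟩ := Set.exists_max_image _ (‖D ·‖)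
    (finite_setOf_posDeg_eq d (s.filter (¬ 0 < ·))) ⟨s, hd, rfl⟩
  suffices ht : ‖D t‖ = 0 from norm_le_zero_iff.1 (ht ▸ maximal s ⟨hd, rfl⟩)
  obtain ⟨p, hpt, hp⟩ : ∃ p ∈ t, 0 < p := by
    by_contra! nonpos
    exact hdpos.ne' (htd ▸ posDeg_eq_zero_iff.2 nonpos)
  obtain ⟨r, rfl⟩ := Multiset.exists_cons_of_mem hpt
  obtain ⟨k, rfl⟩ : ∃ k : ℕ, p = k + 1 := ⟨p.toNat - 1, by omega⟩
  rw [posDeg_cons] at htd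
  have dominated := hD.mul_norm_cons_le k r (C := ‖D ((k + 1 : ℤ) ::ₘ r)‖)
    (fun a b ha hb hab => maximal _ ⟨?_, ?_⟩)
    (fun m hmr hm => maximal _ ⟨?_, ?_⟩) (fun m hmr hm => ih _ ?_ ?_ rfl)
  · have : (k + posDeg r + 1 : ℝ) ≤ n := by
      norm_cast
      omega
    nlinarith [norm_nonneg (D ((k + 1 : ℤ) ::ₘ r))]
  · simp only [posDeg_cons]
    omega
  · simpa [ha, hb, hp] using htu
  all_goals
    obtain ⟨q, rfl⟩ := Multiset.exists_cons_of_mem hmr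
    simp only [posDeg_cons, Multiset.erase_cons_head] at *
  · omega
  · have : 0 < (k : ℤ) + 1 + m := by omega
    simpa [hm, hp, this] using htu
  · omega
  · omega

end IsLoopSolution

/-- The number `z_λ = ∏ k ^ m_k * m_k !` of a partition `λ` with `m_k` parts equal to `k`, as a
complex number; it is the order of the centralizer of a permutation of cycle type `λ`. -/
noncomputable def zNumber (s : Multiset ℤ) : ℂ :=
  s.prod * ∏ k ∈ s.toFinset, ((s.count k)! : ℂ)

lemma zNumber_cons (k : ℤ) (s : Multiset ℤ) :
    zNumber (k ::ₘ s) = k * (s.count k + 1) * zNumber s := by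
  have factorial_prod : ∏ a ∈ (k ::ₘ s).toFinset, (((k ::ₘ s).count a)! : ℂ) =
      (s.count k + 1) * ∏ a ∈ s.toFinset, ((s.count a)! : ℂ) := by
    have extend : ∏ a ∈ s.toFinset, ((s.count a)! : ℂ) =
        ∏ a ∈ (k ::ₘ s).toFinset, ((s.count a)! : ℂ) :=
      Finset.prod_subset (by simp) (by simp +contextual)
    have k_mem : k ∈ (k ::ₘ s).toFinset := by simp
    rw [extend, ← Finset.mul_prod_erase _ _ k_mem, ← Finset.mul_prod_erase _ _ k_mem,
      Multiset.count_cons_self, Nat.factorial_succ, ← mul_assoc]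
    push_cast
    congr 1
    exact Finset.prod_congr rfl fun a ha => by
      rw [Multiset.count_cons_of_ne (Finset.ne_of_mem_erase ha)]
  rw [zNumber, factorial_prod, zNumber, Multiset.prod_cons]
  push_cast
  ring

/-- The joint moment `E [∏ m ∈ s, Z m]`, where the `Z k` for `k > 0` are independent centred
complex Gaussians of variance `k`, `Z (-k)` is the conjugate of `Z k`, and `Z 0 = n`. By Wick's
formula it vanishes unless every `k` occurs in `s` as often as `-k`. -/
noncomputable def wick (n : ℕ) (s : Multiset ℤ) : ℂ :=
  if s.map Neg.neg = s then n ^ s.count 0 * zNumber (s.filter (0 < ·)) else 0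

variable (n : ℕ)

lemma wick_zero : wick n 0 = 1 := by
  simp [wick, zNumber]

lemma wick_zero_cons (s : Multiset ℤ) : wick n (0 ::ₘ s) = n * wick n s := by
  simp [wick, pow_succ', mul_assoc]

lemma wick_cons_neg_cons {m : ℤ} (hm : 0 < m) (s : Multiset ℤ) :
    wick n (m ::ₘ -m ::ₘ s) = m * (s.count m + 1) * wick n s := by
  have symm_iff : (m ::ₘ -m ::ₘ s).map Neg.neg = m ::ₘ -m ::ₘ s ↔ s.map Neg.neg = s := by
    rw [Multiset.map_cons, Multiset.map_cons, neg_neg, Multiset.cons_swap, Multiset.cons_inj_right,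
      Multiset.cons_inj_right]
  simp only [wick, symm_iff, mul_ite, mul_zero]
  congr 1
  rw [Multiset.count_cons_of_ne hm.ne, Multiset.count_cons_of_ne (neg_ne_zero.2 hm.ne').symm,
    Multiset.filter_cons_of_pos _ hm, Multiset.filter_cons_of_neg _ (by omega), zNumber_cons,
    Multiset.count_filter_of_pos hm]
  ring

lemma count_neg_mul_wick (m : ℤ) (s : Multiset ℤ) :
    s.count (-m) * wick n s = s.count m * wick n s := by
  unfold wick
  split_ifs with symm
  · rw [← Multiset.count_map_eq_count' Neg.neg s neg_injective m, symm]
  · simp only [mul_zero]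

theorem wick_cons {m : ℤ} (hm : m ≠ 0) (s : Multiset ℤ) :
    wick n (m ::ₘ s) = (|m| : ℤ) * s.count (-m) * wick n (s.erase (-m)) := by
  by_cases mem : -m ∈ s
  · obtain ⟨t, rfl⟩ := Multiset.exists_cons_of_mem mem
    rw [Multiset.erase_cons_head, Multiset.count_cons_self]
    push_cast
    obtain hneg | hpos := lt_or_gt_of_ne hm
    · have := wick_cons_neg_cons n (neg_pos.2 hneg) t
      rw [Multiset.cons_swap, abs_of_neg hneg]
      simpa using this
    · rw [wick_cons_neg_cons n hpos, abs_of_pos hpos]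
      linear_combination -(m : ℂ) * count_neg_mul_wick n m t
  · have not_symm : (m ::ₘ s).map Neg.neg ≠ m ::ₘ s := by
      intro symm
      have : -m ∈ m ::ₘ s := symm ▸ Multiset.mem_map_of_mem _ (Multiset.mem_cons_self m s)
      rcases Multiset.mem_cons.1 this with h | h
      · omega
      · exact mem h
    rw [wick, if_neg not_symm, Multiset.count_eq_zero_of_notMem mem]
    simp only [Nat.cast_zero, mul_zero, zero_mul]

/-- The contribution to the loop equation for `wick n` of merging `tr (M ^ k)` with the factors
`tr (M ^ m)` of the product indexed by `s`, one for each occurrence of `m`. -/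
noncomputable def mergeTerm (k : ℕ) (s : Multiset ℤ) (m : ℤ) : ℂ :=
  s.count m * (m * wick n ((k + m) ::ₘ s.erase m))

lemma wick_split_eq_neg_mergeTerm {k l : ℕ} (hl : l < k) (s : Multiset ℤ) :
    wick n ((l : ℤ) ::ₘ ((k : ℤ) - l) ::ₘ s) = -mergeTerm n k s (l - k) := by
  rw [Multiset.cons_swap, wick_cons n (by omega), neg_sub, Multiset.count_cons_of_ne (by omega),
    Multiset.erase_cons_tail _ (by omega), abs_of_pos (by omega), mergeTerm, add_sub_cancel]
  push_cast
  ring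

lemma mergeTerm_reflect {k : ℕ} (s : Multiset ℤ) {m : ℤ} (hm : m < -k ∨ 0 < m) :
    mergeTerm n k s (-k - m) = -mergeTerm n k s m := by
  have pairing (a b : ℤ) (hab : a + b = -k) (hb : b ≠ 0) (hne : a ≠ b) :
      mergeTerm n k s a =
        s.count a * s.count b * (a * |b| : ℤ) * wick n ((s.erase a).erase b) := by
    rw [mergeTerm, show (k : ℤ) + a = -b by omega, wick_cons n (neg_ne_zero.2 hb), neg_neg,
      abs_neg, Multiset.count_erase_of_ne hne.symm]
    push_cast
    ring
  rw [pairing (-k - m) m (by ring) (by omega) (by omega),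
    pairing m (-k - m) (by ring) (by omega) (by omega), Multiset.erase_comm]
  have weights : (-k - m) * |m| = -(m * |-k - m|) := by
    obtain hm | hm := hm
    · rw [abs_of_neg (by omega), abs_of_pos (by omega)]
      ring
    · rw [abs_of_pos (by omega), abs_of_neg (by omega)]
      ring
  rw [weights, Int.cast_neg]
  ring

lemma sum_mergeTerm_eq_zero {k : ℕ} (s : Multiset ℤ) (N : ℕ) :
    ∑ m ∈ Finset.Icc (-(k : ℤ) - N) (N : ℤ) with (m < -(k : ℤ) ∨ 0 < m),
      mergeTerm n k s m = 0 := by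
  refine Finset.sum_involution (fun m _ => -(k : ℤ) - m) (fun m hm => ?_) (fun m hm _ => ?_)
    (fun m hm => ?_) (fun m _ => by ring)
  all_goals simp only [Finset.mem_filter, Finset.mem_Icc] at hm
  · rw [mergeTerm_reflect n s hm.2, add_neg_cancel]
  · omega
  · simp only [Finset.mem_filter, Finset.mem_Icc]
    omega

lemma sum_map_eq_sum_mergeTerm (k : ℕ) (s : Multiset ℤ) {A : Finset ℤ} (hA : ∀ m ∈ s, m ∈ A) :
    (s.map fun m : ℤ => (m : ℂ) * wick n (((k : ℤ) + m) ::ₘ s.erase m)).sum =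
      ∑ m ∈ A, mergeTerm n k s m := by
  rw [Finset.sum_multiset_map_count]
  simp only [nsmul_eq_mul]
  exact Finset.sum_subset (fun m hm => hA m (Multiset.mem_toFinset.1 hm)) (by simp +contextual)

-- The splitting terms cancel the merging terms with `-k ≤ m < 0`; the remaining merging terms
-- cancel in pairs under `m ↦ -k - m`.
theorem isLoopSolution_wick : IsLoopSolution n (wick n) where
  zero_cons := wick_zero_cons n
  loop k s := by
    set N : ℕ := (s.map Int.natAbs).sum
    have mem_window : ∀ m ∈ s, m ∈ Finset.Icc (-(k : ℤ) - N) (N : ℤ) := fun m hm => by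
      have : m.natAbs ≤ N := Multiset.single_le_sum (by simp) _ (Multiset.mem_map_of_mem _ hm)
      rw [Finset.mem_Icc]
      omega
    rw [sum_map_eq_sum_mergeTerm n k s mem_window,
      ← Finset.sum_filter_add_sum_filter_not _ fun m : ℤ => m < -k ∨ 0 < m, sum_mergeTerm_eq_zero,
      zero_add, Finset.sum_congr rfl fun l hl =>
        wick_split_eq_neg_mergeTerm n (Finset.mem_range.1 hl) s,
      Finset.sum_neg_distrib, neg_add_eq_zero]
    refine Finset.sum_of_injOn (fun l : ℕ => (l : ℤ) - k) (fun a _ b _ hab => by simpa using hab)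
      (fun l hl => ?_) (fun m hm hml => ?_) fun _ _ => rfl
    · simp only [Finset.coe_range, Set.mem_Iio, Finset.coe_filter, Finset.mem_Icc,
        Set.mem_ofPred_eq] at hl ⊢
      omega
    · have : m = 0 := by
        simp only [Finset.mem_filter, Finset.mem_Icc, Finset.coe_range, Set.mem_image, Set.mem_Iio,
          not_exists, not_and] at hm hml
        by_contra hne
        have := hml (m + k).toNat
        omega
      simp [mergeTerm, this]

theorem traceMoment_eq_wick (μ : Measure (unitaryGroup (Fin n) ℂ)) [IsProbabilityMeasure μ]
    [μ.IsMulLeftInvariant] {s : Multiset ℤ} (hs : posDeg s ≤ n) : traceMoment μ s = wick n s :=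
  sub_eq_zero.1 <| ((isLoopSolution_traceMoment μ).sub (isLoopSolution_wick n)).eq_zero
    (by simp [traceMoment_zero, wick_zero]) hs

end LoopEquations

section GaussianMoments

lemma centralBinom_mul_factorial (i : ℕ) :
    i.centralBinom * i ! = 2 ^ i * (2 * i - 1)‼ := by
  refine Nat.eq_of_mul_eq_mul_right i.factorial_pos ?_
  calc i.centralBinom * i ! * i ! = (2 * i)! := by
        have := Nat.choose_mul_factorial_mul_factorial (Nat.le_mul_of_pos_left i two_pos)
        rwa [show 2 * i - i = i by omega, ← Nat.centralBinom_eq_two_mul_choose] at this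
    _ = (2 * i)‼ * (2 * i - 1)‼ := by
        cases i with
        | zero => rfl
        | succ i => exact Nat.factorial_eq_mul_doubleFactorial (2 * i + 1)
    _ = 2 ^ i * (2 * i - 1)‼ * i ! := by
        rw [Nat.doubleFactorial_two_mul]
        ring

variable {n j : ℕ}

lemma wick_replicate_add_replicate_neg (n : ℕ) (hj : 0 < j) (a : ℕ) :
    wick n (.replicate a (j : ℤ) + .replicate a (-j : ℤ)) = j ^ a * a ! := by
  induction a with
  | zero => simp [wick_zero]
  | succ a ih =>
    have hne : (j : ℤ) ≠ -j := by omega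
    rw [Multiset.replicate_succ, Multiset.replicate_succ, Multiset.cons_add, Multiset.add_cons,
      wick_cons_neg_cons n (by exact_mod_cast hj), ih, Multiset.count_add,
      Multiset.count_replicate_self, Multiset.count_replicate, if_neg hne.symm, Nat.factorial_succ]
    push_cast
    ring

lemma traceProd_replicate_add_replicate_neg (M : unitaryGroup (Fin n) ℂ) (m : ℤ) (a b : ℕ) :
    traceProd (.replicate a m + .replicate b (-m)) M =
      trU M m ^ a * starRingEnd ℂ (trU M m) ^ b := by
  simp [traceProd, trU_neg]

variable (μ : Measure (unitaryGroup (Fin n) ℂ)) [IsProbabilityMeasure μ] [μ.IsMulLeftInvariant]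

theorem integral_trU_pow_mul_conj_pow (hj : 0 < j) {a b : ℕ} (hab : (a + b) * j ≤ 2 * n) :
    ∫ M, trU M j ^ a * starRingEnd ℂ (trU M j) ^ b ∂μ =
      if a = b then (j : ℂ) ^ a * a ! else 0 := by
  simp only [← traceProd_replicate_add_replicate_neg]
  change traceMoment μ _ = _
  split_ifs with h
  · subst h
    rw [traceMoment_eq_wick, wick_replicate_add_replicate_neg n hj]
    simp only [posDeg, Multiset.map_add, Multiset.map_replicate, Int.toNat_natCast,
      Int.toNat_neg_natCast, Multiset.sum_add, Multiset.sum_replicate, smul_eq_mul, mul_zero]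
    linarith
  · refine (isLoopSolution_traceMoment μ).eq_zero_of_sum_ne_zero ?_
    have degree : (.replicate a (j : ℤ) + .replicate b (-j : ℤ) : Multiset ℤ).sum =
        (a - b) * j := by
      simp only [Multiset.sum_add, Multiset.sum_replicate, nsmul_eq_mul]
      ring
    rw [degree]
    exact mul_ne_zero (sub_ne_zero.2 (by exact_mod_cast h)) (by exact_mod_cast hj.ne')

theorem integral_trU_add_conj_pow (hj : 0 < j) {k : ℕ} (hk : k * j ≤ 2 * n) :
    ∫ M, (trU M j + starRingEnd ℂ (trU M j)) ^ k ∂μ =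
      if Even k then (2 * j : ℂ) ^ (k / 2) * (k - 1)‼ else 0 := by
  have integrable (a b : ℕ) : Integrable
      (fun M : unitaryGroup (Fin n) ℂ => trU M j ^ a * starRingEnd ℂ (trU M j) ^ b) μ := by
    simp only [← traceProd_replicate_add_replicate_neg]
    exact integrable_of_continuous_of_compactSpace (continuous_traceProd _) μ
  simp only [add_pow]
  rw [integral_finsetSum _ fun a _ => (integrable _ _).mul_const _]
  simp only [integral_mul_const]
  have exponents {a : ℕ} (ha : a ∈ Finset.range (k + 1)) : (a + (k - a)) * j ≤ 2 * n := by
    rwa [Nat.add_sub_cancel' (Finset.mem_range_succ_iff.1 ha)]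
  rw [Finset.sum_congr rfl fun a ha => by
    rw [integral_trU_pow_mul_conj_pow μ hj (exponents ha)]]
  split_ifs with heven
  · obtain ⟨i, rfl⟩ := heven.two_dvd
    rw [Finset.sum_eq_single i (fun a _ ha => by rw [if_neg (by omega), zero_mul])
        (fun hi => absurd (Finset.mem_range.2 (by omega)) hi), if_pos (by omega),
      ← Nat.centralBinom_eq_two_mul_choose, Nat.mul_div_cancel_left i two_pos, mul_pow]
    have := congrArg (Nat.cast : ℕ → ℂ) (centralBinom_mul_factorial i)
    push_cast at this
    linear_combination (j : ℂ) ^ i * this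
  · refine Finset.sum_eq_zero fun a _ => ?_
    rw [if_neg (by grind), zero_mul]

theorem integral_normalized_trU_pow (hj : 0 < j) {k : ℕ} (hk : k * j ≤ 2 * n) :
    ∫ M, ((trU M j + starRingEnd ℂ (trU M j)).re / √(2 * j)) ^ k ∂μ =
      if Even k then ((k - 1)‼ : ℝ) else 0 := by
  have real_valued (M : unitaryGroup (Fin n) ℂ) :
      (((trU M j + starRingEnd ℂ (trU M j)).re / √(2 * j) : ℝ) : ℂ) ^ k =
        (trU M j + starRingEnd ℂ (trU M j)) ^ k / (√(2 * j) : ℂ) ^ k := by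
    rw [Complex.add_conj, ofReal_re]
    push_cast
    rw [div_pow]
  apply Complex.ofReal_injective
  rw [← integral_complex_ofReal]
  simp only [ofReal_pow, real_valued]
  rw [integral_div, integral_trU_add_conj_pow μ hj hk]
  split_ifs with heven
  · have sqrt_pow : (√(2 * j) : ℂ) ^ k = (2 * j) ^ (k / 2) := by
      nth_rw 1 [← Nat.two_mul_div_two_of_even heven]
      rw [pow_mul]
      congr 1
      exact_mod_cast Real.sq_sqrt (by positivity)
    have : (2 * j : ℂ) ^ (k / 2) ≠ 0 := by simp [hj.ne']
    rw [sqrt_pow, mul_div_cancel_left₀ _ this]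
    norm_cast
  · simp

end GaussianMoments

theorem u_four_moments_general (n j : ℕ) (hj : 0 < j) (h : 2 * j ≤ n)
    (μ : Measure (Matrix.unitaryGroup (Fin n) ℂ)) [IsProbabilityMeasure μ]
    [μ.IsMulLeftInvariant]
    (W : Matrix.unitaryGroup (Fin n) ℂ → ℝ)
    (hW : W = fun M => (trU M j + (starRingEnd ℂ) (trU M j)).re / Real.sqrt (2 * j)) :
    (∫ M, W M ∂μ = 0) ∧ (∫ M, (W M) ^ 2 ∂μ = 1) ∧
      (∫ M, (W M) ^ 3 ∂μ = 0) ∧ (∫ M, (W M) ^ 4 ∂μ = 3) := by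
  subst hW
  have moment {k : ℕ} (hk : k ≤ 4) := integral_normalized_trU_pow μ hj (k := k) (by nlinarith)
  refine ⟨?_, (moment (k := 2) (by norm_num)).trans (by simp),
    (moment (k := 3) (by norm_num)).trans (by simp [Nat.even_iff]),
    (moment le_rfl).trans (by norm_num [Nat.even_iff, Nat.doubleFactorial])⟩
  simpa only [pow_one] using (moment (k := 1) (by norm_num)).trans (by simp)

/-- For `4j ≤ n` and Haar-distributed `M` in `U(n,ℂ)`, the first four moments of
`W = (Tr(M^j) + conj(Tr(M^j)))/√(2j)` (a real number, recorded via the real part) match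
those of a standard normal: `E[W] = 0`, `E[W²] = 1`, `E[W³] = 0`, `E[W⁴] = 3`. -/
theorem u_four_moments (n j : ℕ) (hn : 0 < n) (hj : 0 < j) (h : 4 * j ≤ n)
    (μ : Measure (Matrix.unitaryGroup (Fin n) ℂ)) [IsProbabilityMeasure μ]
    [μ.IsHaarMeasure]
    (W : Matrix.unitaryGroup (Fin n) ℂ → ℝ)
    (hW : W = fun M => (trU M j + (starRingEnd ℂ) (trU M j)).re / Real.sqrt (2 * j)) :
    (∫ M, W M ∂μ = 0) ∧ (∫ M, (W M) ^ 2 ∂μ = 1) ∧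
      (∫ M, (W M) ^ 3 ∂μ = 0) ∧ (∫ M, (W M) ^ 4 ∂μ = 3) :=
  u_four_moments_general n j hj (by omega) μ W hW
end
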